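/- arXiv:2112.10884 — 5 statements merged into one kernel-verified Lean document; each statement's English description precedes it below -/
import Mathlib

section
/- Let V be a finite set, let (Ω, F, μ) be a standard Borel probability space, and for each v ∈ V let f_v : Ω → ℝ be a measurable random variable. Let G = (V, E) be a finite DAG that is a perfect map of the family (f_v)_{v∈V}. Then for every X ∈ V, the induced subgraph G[V∖{X}] is a perfect map of the subfamily (f_v)_{v∈V∖{X}} if and only if X is removable in G. -/
/-!
Since `E` is a perfect map of the whole family, conditional independence of `(f v)_{v ∈ A}` and
`(f v)_{v ∈ B}` given `(f v)_{v ∈ S}` is the same as d-separation of `A` and `B` by `S` in `E`.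
Hence `E` with `X` deleted is a perfect map of the remaining family iff it has the same
d-separations between sets avoiding `X` as `E`. d-separation of sets is d-separation of all pairs of
their elements (`dSepSets_iff`), and `DSep` is set d-separation of singletons (`dSep_iff`), so
agreement on sets is equivalent to agreement on pairs, which is removability.
-/

open Set MeasureTheory ProbabilityTheory

variable {V : Type*}

/-- Adjacency (neighbor relation) in a directed graph with edge relation `E`. -/
def Adj (E : V → V → Prop) (x y : V) : Prop := E x y ∨ E y x

/-- The digraph `E` is acyclic (no directed cycles). -/
def Acyclic (E : V → V → Prop) : Prop := ∀ v : V, ¬ Relation.TransGen E v v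

/-- `y` is a descendant of `x`: directed path of length ≥ 1. -/
def Desc (E : V → V → Prop) : V → V → Prop := Relation.TransGen E

/-- `p : Fin (n+1) → V` is a path: distinct vertices with consecutive vertices adjacent. -/
def IsPath (E : V → V → Prop) {n : ℕ} (p : Fin (n + 1) → V) : Prop :=
  Function.Injective p ∧ ∀ i : Fin n, Adj E (p i.castSucc) (p i.succ)

/-- The path `p` is blocked by the set `S`: some interior non-collider vertex lies in `S`,
or some interior collider vertex is such that neither it nor any of its descendants lies in `S`. -/
def Blocked (E : V → V → Prop) (S : Set V) {n : ℕ} (p : Fin (n + 1) → V) : Prop :=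
  ∃ k : ℕ, ∃ _hk0 : 0 < k, ∃ _hkn : k < n,
    (¬ (E (p ⟨k - 1, by omega⟩) (p ⟨k, by omega⟩) ∧
          E (p ⟨k + 1, by omega⟩) (p ⟨k, by omega⟩)) ∧ p ⟨k, by omega⟩ ∈ S) ∨
    ((E (p ⟨k - 1, by omega⟩) (p ⟨k, by omega⟩) ∧
          E (p ⟨k + 1, by omega⟩) (p ⟨k, by omega⟩)) ∧ p ⟨k, by omega⟩ ∉ S ∧
        ∀ d, Desc E (p ⟨k, by omega⟩) d → d ∉ S)

/-- `S` d-separates the distinct vertices `x` and `y` in the digraph `E`. -/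
def DSep (E : V → V → Prop) (x y : V) (S : Set V) : Prop :=
  x ≠ y ∧ x ∉ S ∧ y ∉ S ∧
    ∀ (n : ℕ) (p : Fin (n + 1) → V), 0 < n → IsPath E p →
      p 0 = x → p (Fin.last n) = y → Blocked E S p

/-- `S` d-separates the sets `A` and `B` in the digraph `E`: every path from a vertex
of `A` to a vertex of `B` is blocked by `S`. -/
def DSepSets (E : V → V → Prop) (A B S : Set V) : Prop :=
  ∀ (n : ℕ) (p : Fin (n + 1) → V), 0 < n → IsPath E p →
    p 0 ∈ A → p (Fin.last n) ∈ B → Blocked E S p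

/-- The induced subgraph obtained from `E` by deleting the vertex `x`. -/
def Del (E : V → V → Prop) (x : V) : V → V → Prop := fun a b => E a b ∧ a ≠ x ∧ b ≠ x

/-- `x` is removable in `E`: d-separation statements not involving `x` are the same
in `E` and in the induced subgraph with `x` deleted. -/
def Removable (E : V → V → Prop) (x : V) : Prop :=
  ∀ y z : V, y ≠ x → z ≠ x → y ≠ z → ∀ S : Set V, x ∉ S →
    (DSep E y z S ↔ DSep (Del E x) y z S)

/-- The σ-algebra generated by the subfamily `(f v)_{v ∈ A}`. -/
def sigmaAlg {Ω : Type*} [MeasurableSpace Ω] (f : V → Ω → ℝ) (A : Set V) :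
    MeasurableSpace Ω :=
  ⨆ v ∈ A, MeasurableSpace.comap (f v) inferInstance

theorem sigmaAlg_le {Ω : Type*} [mΩ : MeasurableSpace Ω] (f : V → Ω → ℝ)
    (hf : ∀ v, Measurable (f v)) (A : Set V) : sigmaAlg f A ≤ mΩ :=
  iSup₂_le fun v _ => (hf v).comap_le

/-- The induced subgraph `E[U]` is a perfect map of the subfamily `(f v)_{v ∈ U}`:
for all pairwise disjoint `A, B, S ⊆ U` with `A, B` nonempty, `S` d-separates `A` and `B`
in `E[U]` iff the σ-algebras generated by `(f v)_{v ∈ A}` and `(f v)_{v ∈ B}` are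
conditionally independent given the one generated by `(f v)_{v ∈ S}` under `μ`. -/
def IsPerfectMapOn {Ω : Type*} [mΩ : MeasurableSpace Ω] [StandardBorelSpace Ω]
    (μ : Measure Ω) [IsProbabilityMeasure μ] (E : V → V → Prop) (U : Set V)
    (f : V → Ω → ℝ) (hf : ∀ v, Measurable (f v)) : Prop :=
  ∀ A B S : Set V, A ⊆ U → B ⊆ U → S ⊆ U →
    A.Nonempty → B.Nonempty → Disjoint A B → Disjoint A S → Disjoint B S →
    (DSepSets (fun a b => E a b ∧ a ∈ U ∧ b ∈ U) A B S ↔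
      CondIndep (sigmaAlg f S) (sigmaAlg f A) (sigmaAlg f B) (sigmaAlg_le f hf S) μ)

theorem dSep_iff (E : V → V → Prop) {x y : V} {S : Set V} (hxy : x ≠ y) (hx : x ∉ S)
    (hy : y ∉ S) : DSep E x y S ↔ DSepSets E {x} {y} S :=
  ⟨fun h n p hn hp h0 hl => h.2.2.2 n p hn hp h0 hl,
    fun h => ⟨hxy, hx, hy, fun n p hn hp h0 hl => h n p hn hp h0 hl⟩⟩

theorem dSepSets_iff (E : V → V → Prop) {A B S : Set V} (hAB : Disjoint A B)
    (hAS : Disjoint A S) (hBS : Disjoint B S) :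
    DSepSets E A B S ↔ ∀ a ∈ A, ∀ b ∈ B, DSep E a b S := by
  constructor
  · intro h a ha b hb
    exact ⟨hAB.ne_of_mem ha hb, disjoint_left.1 hAS ha, disjoint_left.1 hBS hb,
      fun n p hn hp h0 hl => h n p hn hp (h0 ▸ ha) (hl ▸ hb)⟩
  · intro h n p hn hp h0 hl
    exact (h _ h0 _ hl).2.2.2 n p hn hp rfl rfl

/-- if a finite DAG `E` is a perfect map of the family `(f v)_{v ∈ V}` over a
standard Borel probability space, then for every vertex `X`, the induced subgraph on
`V ∖ {X}` is a perfect map of the subfamily `(f v)_{v ≠ X}` iff `X` is removable in `E`. -/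
theorem stmt0 [Fintype V] {Ω : Type*} [MeasurableSpace Ω] [StandardBorelSpace Ω]
    (μ : Measure Ω) [IsProbabilityMeasure μ]
    (E : V → V → Prop) (hacy : Acyclic E)
    (f : V → Ω → ℝ) (hf : ∀ v, Measurable (f v))
    (hperf : IsPerfectMapOn μ E Set.univ f hf) :
    ∀ X : V, (IsPerfectMapOn μ E ({X}ᶜ) f hf ↔ Removable E X) := by
  intro X
  have hE : (fun a b => E a b ∧ a ∈ (Set.univ : Set V) ∧ b ∈ (Set.univ : Set V)) = E := by
    funext a b; simp
  have hperf' := fun A B S => hperf A B S (subset_univ _) (subset_univ _) (subset_univ _)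
  simp only [hE] at hperf'
  constructor
  · intro h y z hy hz hyz S hS
    -- If an endpoint lies in `S`, both sides are false by definition of `DSep`.
    by_cases hyS : y ∈ S
    · exact ⟨fun h => absurd hyS h.2.1, fun h => absurd hyS h.2.1⟩
    by_cases hzS : z ∈ S
    · exact ⟨fun h => absurd hzS h.2.2.1, fun h => absurd hzS h.2.2.1⟩
    have d1 : Disjoint ({y} : Set V) {z} := by simpa using hyz
    have d2 : Disjoint ({y} : Set V) S := by simpa using hyS
    have d3 : Disjoint ({z} : Set V) S := by simpa using hzS
    rw [dSep_iff E hyz hyS hzS, dSep_iff (Del E X) hyz hyS hzS]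
    exact (hperf' {y} {z} S ⟨y, rfl⟩ ⟨z, rfl⟩ d1 d2 d3).trans
      (h {y} {z} S (by simpa using hy.symm) (by simpa using hz.symm) (fun s hs e => hS (e ▸ hs))
        ⟨y, rfl⟩ ⟨z, rfl⟩ d1 d2 d3).symm
  · intro h A B S hA hB hS hAn hBn hAB hAS hBS
    rw [← hperf' A B S hAn hBn hAB hAS hBS, dSepSets_iff E hAB hAS hBS,
      dSepSets_iff _ hAB hAS hBS]
    exact forall₂_congr fun a ha => forall₂_congr fun b hb =>
      (h a b (hA ha) (hB hb) (hAB.ne_of_mem ha hb) S (fun hX => hS hX rfl)).symm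
end

section
/- Let G = (V,E) be a finite DAG with ω(G) ≤ m and let X ∈ V. Suppose that for every S ⊆ Mb(X) with |S| ≤ m−2 the following two conditions hold: (i) for all distinct Y,Z ∈ Mb(X)∖S, the set (Mb(X)∪{X})∖({Y,Z}∪S) does not d-separate Y and Z in G; and (ii) for all Y ∈ Mb(X)∖S, the set Mb(X)∖({Y}∪S) does not d-separate X and Y in G. Then X is removable in G. Moreover, if V is nonempty, the set of vertices of G satisfying this condition is nonempty. -/
/-!
Why the theorem holds.

*The condition forces a rigid local structure.* Write `x` for the vertex. Call a set `S` of children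
of `x` *peeled* if `S` is a clique and every vertex of `Mb(x) \ S` is a parent of every vertex of `S`.
If `S` is peeled and `z` is a child outside `S` with no descendant among the children outside `S`,
then `S ∪ {x, z}` is a clique, so `|S| ≤ m - 2` and conditions (i), (ii) apply to `S`. Condition (ii)
shows that a co-parent of `x` in `Mb(x) \ S` shares with `x` a child outside `S`; hence `z` has no
descendant in `Mb(x) \ S`. Condition (i) then shows that `z` is adjacent to all of `Mb(x) \ S`, so
`S ∪ {z}` is peeled. A peeled set of maximal size is therefore all of `Ch(x)`: the children form a
clique, and every non-child in `Mb(x)` is a parent of every child (`rigid_of_remCond`).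

*This structure implies removability.* d-connection by paths is the same as reachability in a state
space of pairs (vertex, direction of arrival), see `Reach` and `dsep_iff_reach`; this amounts to
saying that active walks can be shortened to active paths. A walk through `x` is rerouted
around `x` by induction on reachability (`reach_del`).

*Existence.* A sink of the graph satisfies the condition: its Markov boundary consists of its parents,
which are adjacent to it and connected to each other through the conditioned collider `x`.
-/

open Set

variable {V : Type*}

/-- Parents of `x`. -/
def Pa (E : V → V → Prop) (x : V) : Set V := {y | E y x}

/-- Children of `x`. -/
def Ch (E : V → V → Prop) (x : V) : Set V := {y | E x y}

/-- Co-parents of `x`: distinct, non-adjacent vertices sharing a child with `x`. -/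
def CP (E : V → V → Prop) (x : V) : Set V :=
  {y | y ≠ x ∧ ¬ Adj E x y ∧ ∃ w, E x w ∧ E y w}

/-- The (graphical) Markov boundary of `x`. -/
def Mb (E : V → V → Prop) (x : V) : Set V := Pa E x ∪ Ch E x ∪ CP E x

/-- The clique number of the skeleton of `E` is at most `m`. -/
def CliqueNumLE (E : V → V → Prop) (m : ℕ) : Prop :=
  ∀ K : Finset V, (∀ x ∈ K, ∀ y ∈ K, x ≠ y → Adj E x y) → K.card ≤ m

/-- Conditions (i) and (ii) for every `S ⊆ Mb(x)` with `|S| ≤ t`. -/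
def RemCond (E : V → V → Prop) (x : V) (t : ℕ) : Prop :=
  ∀ S : Finset V, ↑S ⊆ Mb E x → S.card ≤ t →
    (∀ y ∈ Mb E x \ ↑S, ∀ z ∈ Mb E x \ ↑S, y ≠ z →
        ¬ DSep E y z ((Mb E x ∪ {x}) \ ({y, z} ∪ ↑S))) ∧
    ∀ y ∈ Mb E x \ ↑S, ¬ DSep E x y (Mb E x \ ({y} ∪ ↑S))

/-- `E` is diamond-free: whenever `a`, `b`, `c` are all parents of some vertex `d` and `a`
is adjacent to both `b` and `c`, then `b` and `c` are adjacent. -/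
def DiamondFree (E : V → V → Prop) : Prop :=
  ∀ a b c d : V, a ≠ b → a ≠ c → b ≠ c → E a d → E b d → E c d →
    Adj E a b → Adj E a c → Adj E b c

/-! ### Open paths -/

/-- `v` belongs to `T` or has a descendant in `T`. -/
def AncOf (E : V → V → Prop) (T : Set V) (v : V) : Prop := ∃ d ∈ T, Relation.ReflTransGen E v d

/-- The first `n + 1` values of `f` form a path (of length `n`, possibly zero) that is not blocked
by `T`. Indexing by `ℕ` makes truncation and extension of paths easy. -/
def OpenPath (E : V → V → Prop) (T : Set V) (f : ℕ → V) (n : ℕ) : Prop :=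
  (∀ i ≤ n, ∀ j ≤ n, f i = f j → i = j) ∧ (∀ i < n, Adj E (f i) (f (i + 1))) ∧
    ∀ k, k + 1 < n →
      (E (f k) (f (k + 1)) ∧ E (f (k + 2)) (f (k + 1)) → AncOf E T (f (k + 1))) ∧
      (¬ (E (f k) (f (k + 1)) ∧ E (f (k + 2)) (f (k + 1))) → f (k + 1) ∉ T)

lemma AncOf.step {E : V → V → Prop} {T : Set V} {v w : V} (h : AncOf E T v) (hw : E w v) :
    AncOf E T w := by
  obtain ⟨d, hd, h⟩ := h
  exact ⟨d, hd, Relation.ReflTransGen.head hw h⟩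

lemma Acyclic.asymm {E : V → V → Prop} (h : Acyclic E) {a b : V} (hab : E a b) (hba : E b a) :
    False :=
  h a ((Relation.TransGen.single hab).tail hba)

lemma Acyclic.ne {E : V → V → Prop} (h : Acyclic E) {a b : V} (hab : E a b) : a ≠ b := by
  rintro rfl
  exact h.asymm hab hab

lemma Acyclic.adj_ne {E : V → V → Prop} (h : Acyclic E) {a b : V} (hab : Adj E a b) : a ≠ b := by
  rcases hab with hab | hab
  · exact h.ne hab
  · exact (h.ne hab).symm

lemma ancOf_iff {E : V → V → Prop} {T : Set V} {v : V} :
    AncOf E T v ↔ v ∈ T ∨ ∃ d, Desc E v d ∧ d ∈ T := by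
  constructor
  · rintro ⟨d, hd, h⟩
    rcases Relation.reflTransGen_iff_eq_or_transGen.1 h with rfl | h
    · exact Or.inl hd
    · exact Or.inr ⟨d, h, hd⟩
  · rintro (h | ⟨d, h, hd⟩)
    · exact ⟨v, h, Relation.ReflTransGen.refl⟩
    · exact ⟨d, hd, Relation.TransGen.to_reflTransGen h⟩

lemma openPath_iff_fin {E : V → V → Prop} {T : Set V} {f : ℕ → V} {n : ℕ} :
    OpenPath E T f n ↔ IsPath E (fun i : Fin (n + 1) => f i) ∧
      ¬ Blocked E T (fun i : Fin (n + 1) => f i) := by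
  constructor
  · rintro ⟨h1, h2, h3⟩
    refine ⟨⟨?_, ?_⟩, ?_⟩
    · intro i j hij
      exact Fin.ext (h1 i (by omega) j (by omega) hij)
    · intro i
      simpa using h2 i i.2
    · rintro ⟨k, hk0, hkn, h⟩
      obtain ⟨k, rfl⟩ : ∃ l, k = l + 1 := ⟨k - 1, by omega⟩
      have h4 := h3 k hkn
      simp only [Nat.add_sub_cancel] at h
      rcases h with ⟨hc, hT⟩ | ⟨hc, hT, hd⟩
      · exact h4.2 hc hT
      · rcases ancOf_iff.1 (h4.1 hc) with h5 | ⟨d, h5, h6⟩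
        · exact hT h5
        · exact hd d h5 h6
  · rintro ⟨⟨h1, h2⟩, h3⟩
    refine ⟨?_, ?_, ?_⟩
    · intro i hi j hj hij
      have := @h1 ⟨i, by omega⟩ ⟨j, by omega⟩ hij
      simpa using this
    · intro i hi
      simpa using h2 ⟨i, hi⟩
    · intro k hk
      constructor
      · intro hc
        by_contra hA
        rw [ancOf_iff] at hA
        push Not at hA
        exact h3 ⟨k + 1, by omega, hk, Or.inr ⟨hc, hA.1, hA.2⟩⟩
      · intro hc hT
        exact h3 ⟨k + 1, by omega, hk, Or.inl ⟨hc, hT⟩⟩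

lemma dsep_iff_openPath {E : V → V → Prop} {T : Set V} {x y : V} :
    DSep E x y T ↔ x ≠ y ∧ x ∉ T ∧ y ∉ T ∧
      ∀ (f : ℕ → V) (n : ℕ), OpenPath E T f n → f 0 = x → f n ≠ y := by
  unfold DSep
  refine and_congr_right fun hxy => and_congr_right fun _ => and_congr_right fun _ => ?_
  constructor
  · intro h f n hf h0 hn
    have hn0 : 0 < n := by
      rcases Nat.eq_zero_or_pos n with rfl | h'
      · exact absurd (h0.symm.trans hn) hxy
      · exact h'
    obtain ⟨hp, hb⟩ := openPath_iff_fin.1 hf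
    exact hb (h n _ hn0 hp (by simpa using h0) (by simpa using hn))
  · intro h n p hn0 hp h0 hn
    by_contra hb
    have hpe : (fun i : Fin (n + 1) => p (Fin.ofNat (n + 1) i)) = p := by
      funext i
      congr 1
      exact Fin.ext (by simp)
    refine h (fun i => p (Fin.ofNat (n + 1) i)) n (openPath_iff_fin.2 ?_) ?_ ?_
    · exact hpe.symm ▸ ⟨hp, hb⟩
    · simpa using h0
    · simpa using hn

lemma exists_openPath {E : V → V → Prop} {T : Set V} {x y : V} (h : ¬ DSep E x y T)
    (hxy : x ≠ y) (hx : x ∉ T) (hy : y ∉ T) :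
    ∃ f n, OpenPath E T f n ∧ f 0 = x ∧ f n = y := by
  rw [dsep_iff_openPath] at h
  push Not at h
  exact h hxy hx hy

/-- Following an open path along a forward edge, one walks down directed edges until a collider,
which is an ancestor of `T`, or until the end of the path. -/
lemma OpenPath.descend {E : V → V → Prop} {T : Set V} {f : ℕ → V} {n : ℕ}
    (h : OpenPath E T f n) {i : ℕ} (he : E (f i) (f (i + 1))) (k : ℕ) :
    i + k + 1 ≤ n → (∃ d ∈ T, Desc E (f i) d) ∨
      (Desc E (f i) (f (i + k + 1)) ∧ E (f (i + k)) (f (i + k + 1))) := by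
  induction k with
  | zero => exact fun _ => Or.inr ⟨Relation.TransGen.single he, he⟩
  | succ k ih =>
    intro hk
    rcases ih (by omega) with h1 | ⟨h1, h2⟩
    · exact Or.inl h1
    · have h3 := h.2.2 (i + k) (by omega)
      rcases h.2.1 (i + k + 1) (by omega) with h4 | h4
      · exact Or.inr ⟨Relation.TransGen.tail h1 h4, h4⟩
      · obtain ⟨d, hd, h5⟩ := h3.1 ⟨h2, h4⟩
        exact Or.inl ⟨d, hd, Relation.TransGen.trans_left h1 h5⟩

lemma OpenPath.descend_last {E : V → V → Prop} {T : Set V} {f : ℕ → V} {n : ℕ}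
    (h : OpenPath E T f n) {i : ℕ} (he : E (f i) (f (i + 1))) (hi : i < n) :
    (∃ d ∈ T, Desc E (f i) d) ∨ (Desc E (f i) (f n) ∧ E (f (n - 1)) (f n)) := by
  have := h.descend he (n - i - 1) (by omega)
  have e1 : i + (n - i - 1) + 1 = n := by omega
  have e2 : i + (n - i - 1) = n - 1 := by omega
  rwa [e1, e2] at this

/-! ### Reachability along active walks -/

/-- `Reach E T y v b`: some walk from `y` to `v` is active given `T`. The flag `b` is `true` if the
last edge points into `v`. The trivial walk gets the flag `false`: if `y ∉ T`, it may be
continued along any edge, just like a walk whose last edge points out of `y`. -/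
inductive Reach (E : V → V → Prop) (T : Set V) (y : V) : V → Bool → Prop
  | start : Reach E T y y false
  | down {v w : V} {b : Bool} : Reach E T y v b → v ∉ T → E v w → Reach E T y w true
  | collide {v w : V} : Reach E T y v true → AncOf E T v → E w v → Reach E T y w false
  | up {v w : V} : Reach E T y v false → v ∉ T → E w v → Reach E T y w false

lemma OpenPath.reach {E : V → V → Prop} (hacy : Acyclic E) {T : Set V} {f : ℕ → V} {n : ℕ}
    (h : OpenPath E T f n) (h0 : f 0 ∉ T) (k : ℕ) :
    k + 1 ≤ n → (E (f k) (f (k + 1)) → Reach E T (f 0) (f (k + 1)) true) ∧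
      (E (f (k + 1)) (f k) → Reach E T (f 0) (f (k + 1)) false) := by
  induction k with
  | zero => exact fun _ => ⟨fun he => Reach.start.down h0 he, fun he => Reach.start.up h0 he⟩
  | succ k ih =>
    intro hk
    obtain ⟨i1, i2⟩ := ih (by omega)
    obtain ⟨hc, hnc⟩ := h.2.2 k (by omega)
    rcases h.2.1 k (by omega) with h1 | h1
    · refine ⟨fun he => (i1 h1).down (hnc fun h => hacy.asymm he h.2) he, fun he => ?_⟩
      exact (i1 h1).collide (hc ⟨h1, he⟩) he
    · have hT := hnc fun h => hacy.asymm h1 h.1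
      exact ⟨fun he => (i2 h1).down hT he, fun he => (i2 h1).up hT he⟩

/-- An open path from `y` to `v` whose last edge allows at least the continuations allowed after
arriving at `v` with flag `b`. -/
def GoodPath (E : V → V → Prop) (T : Set V) (y v : V) (b : Bool) : Prop :=
  ∃ f n, OpenPath E T f n ∧ f 0 = y ∧ f n = v ∧
    (b = true → (∃ m, n = m + 1 ∧ E (f m) v) ∨ v ∉ T) ∧
    (b = false → (∀ m, n = m + 1 → E v (f m)) ∨ AncOf E T v)

lemma OpenPath.truncate {E : V → V → Prop} {T : Set V} {f : ℕ → V} {n i : ℕ}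
    (h : OpenPath E T f n) (hi : i ≤ n) : OpenPath E T f i :=
  ⟨fun a ha b hb => h.1 a (ha.trans hi) b (hb.trans hi), fun a ha => h.2.1 a (by omega),
    fun k hk => h.2.2 k (by omega)⟩

lemma OpenPath.append {E : V → V → Prop} {T : Set V} {f : ℕ → V} {n : ℕ} {w : V}
    (h : OpenPath E T f n) (hw : ∀ i ≤ n, f i ≠ w) (ha : Adj E (f n) w)
    (hst : ∀ m, n = m + 1 → (E (f m) (f n) ∧ E w (f n) → AncOf E T (f n)) ∧
      (¬ (E (f m) (f n) ∧ E w (f n)) → f n ∉ T)) :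
    OpenPath E T (fun i => if i ≤ n then f i else w) (n + 1) := by
  refine ⟨?_, ?_, ?_⟩
  · intro i hi j hj hij
    by_cases h1 : i ≤ n <;> by_cases h2 : j ≤ n <;> simp only [h1, h2, if_true, if_false] at hij
    · exact h.1 i h1 j h2 hij
    · exact absurd hij (hw i h1)
    · exact absurd hij.symm (hw j h2)
    · omega
  · intro i hi
    rcases Nat.lt_or_ge i n with h1 | h1
    · simpa [h1.le, Nat.succ_le_of_lt h1] using h.2.1 i h1
    · obtain rfl : i = n := by omega
      simpa using ha
  · intro k hk
    rcases Nat.lt_or_ge (k + 1) n with h1 | h1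
    · have a1 : k ≤ n := by omega
      have a2 : k + 2 ≤ n := by omega
      simpa only [a1, a2, h1.le, if_true] using h.2.2 k h1
    · obtain rfl : n = k + 1 := by omega
      have a2 : ¬ (k + 2 ≤ k + 1) := by omega
      have a1 : k ≤ k + 1 := by omega
      simpa only [a1, a2, le_refl, if_true, if_false] using hst k rfl

/-- Active walks can be shortened to open paths. When a walk revisits a vertex of the path built so
far, the path is cut there. -/
lemma Reach.goodPath {E : V → V → Prop} (hacy : Acyclic E) {T : Set V} {y : V} (hy : y ∉ T)
    {v : V} {b : Bool} (h : Reach E T y v b) : GoodPath E T y v b := by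
  -- a step along a forward edge
  have hdown : ∀ (v w : V) (b : Bool), GoodPath E T y v b → v ∉ T → E v w →
      GoodPath E T y w true := by
    rintro v w b ⟨f, n, hf, h0, rfl, -, -⟩ hT he
    by_cases hw : ∃ i ≤ n, f i = w
    · obtain ⟨i, hi, rfl⟩ := hw
      refine ⟨f, i, hf.truncate hi, h0, rfl, fun _ => ?_, by simp⟩
      rcases i with _ | m
      · exact Or.inr (h0 ▸ hy)
      · have hlt : m + 1 < n := lt_of_le_of_ne hi fun e => hacy.ne he (by rw [e])
        by_cases hm : E (f m) (f (m + 1))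
        · exact Or.inl ⟨m, rfl, hm⟩
        · exact Or.inr ((hf.2.2 m hlt).2 fun h => hm h.1)
    · push Not at hw
      refine ⟨_, n + 1, hf.append hw (Or.inl he) ?_, by simpa using h0, by simp, ?_, by simp⟩
      · exact fun m _ => ⟨fun h => (hacy.asymm he h.2).elim, fun _ => hT⟩
      · exact fun _ => Or.inl ⟨n, rfl, by simpa using he⟩
  -- a step against an edge, given that the actual path may be continued that way
  have hup : ∀ (v w : V) (f : ℕ → V) (n : ℕ), OpenPath E T f n → f 0 = y → f n = v →
      ((∀ m, n = m + 1 → ¬ E (f m) v → v ∉ T) ∧ (∀ m, n = m + 1 → E (f m) v → AncOf E T v)) →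
      E w v → GoodPath E T y w false := by
    rintro v w f n hf h0 rfl ⟨hs1, hs2⟩ he
    by_cases hw : ∃ i ≤ n, f i = w
    · obtain ⟨i, hi, rfl⟩ := hw
      refine ⟨f, i, hf.truncate hi, h0, rfl, by simp, fun _ => ?_⟩
      have hlt : i < n := lt_of_le_of_ne hi fun e => hacy.ne he (by rw [e])
      rcases i with _ | m
      · exact Or.inl fun m hm => by omega
      · rcases hf.2.1 m (by omega) with hm | hm
        · right
          rcases hf.2.1 (m + 1) hlt with h1 | h1
          · rcases hf.descend_last h1 hlt with ⟨d, hd, h2⟩ | ⟨-, h2⟩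
            · exact ⟨d, hd, Relation.TransGen.to_reflTransGen h2⟩
            · exact (hs2 (n - 1) (by omega) h2).step he
          · exact (hf.2.2 m hlt).1 ⟨hm, h1⟩
        · left
          intro m' hm'
          obtain rfl : m = m' := by omega
          exact hm
    · push Not at hw
      refine ⟨_, n + 1, hf.append hw (Or.inr he) ?_, by simpa using h0, by simp, by simp, ?_⟩
      · exact fun m hm => ⟨fun h => hs2 m hm h.1, fun h => hs1 m hm fun h' => h ⟨h', he⟩⟩
      · intro _
        left
        intro m hm
        obtain rfl : n = m := by omega
        simpa using he
  induction h with
  | start =>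
    refine ⟨fun _ => y, 0, ⟨?_, ?_, ?_⟩, rfl, rfl, by simp, fun _ => Or.inl ?_⟩
    · intros; omega
    · intros; omega
    · intros; omega
    · intros; omega
  | down _ hT he ih => exact hdown _ _ _ ih hT he
  | collide _ hA he ih =>
    obtain ⟨f, n, hf, h0, hn, h1, -⟩ := ih
    refine hup _ _ f n hf h0 hn ⟨fun m hm hne => ?_, fun _ _ _ => hA⟩ he
    rcases h1 rfl with ⟨m', hm', h2⟩ | h2
    · obtain rfl : m = m' := by omega
      exact absurd h2 hne
    · exact h2
  | up _ hT he ih =>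
    obtain ⟨f, n, hf, h0, hn, -, h1⟩ := ih
    refine hup _ _ f n hf h0 hn ⟨fun _ _ _ => hT, fun m hm h2 => ?_⟩ he
    rcases h1 rfl with h3 | h3
    · exact (hacy.asymm h2 (h3 m hm)).elim
    · exact h3

lemma dsep_iff_reach {E : V → V → Prop} (hacy : Acyclic E) {T : Set V} {x y : V} :
    DSep E x y T ↔ x ≠ y ∧ x ∉ T ∧ y ∉ T ∧ ¬ ∃ b, Reach E T x y b := by
  rw [dsep_iff_openPath]
  refine and_congr_right fun hxy => and_congr_right fun hx => and_congr_right fun _ => ?_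
  constructor
  · rintro h ⟨b, hb⟩
    obtain ⟨f, n, hf, h0, hn, -⟩ := hb.goodPath hacy hx
    exact h f n hf h0 hn
  · rintro h f n hf rfl rfl
    rcases n with _ | k
    · exact hxy rfl
    · have := hf.reach hacy hx k le_rfl
      rcases hf.2.1 k (by omega) with h1 | h1
      · exact h ⟨_, this.1 h1⟩
      · exact h ⟨_, this.2 h1⟩

/-! ### Structure of the Markov boundary forced by the condition -/

lemma not_mem_mb {E : V → V → Prop} (hacy : Acyclic E) (x : V) : x ∉ Mb E x := by
  rintro ((h | h) | h)
  · exact hacy.ne h rfl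
  · exact hacy.ne h rfl
  · exact h.1 rfl

lemma mem_mb_of_parent_of_child {E : V → V → Prop} {x z w : V} (hz : E x z) (hw : E w z)
    (hwx : w ≠ x) : w ∈ Mb E x := by
  by_cases h : Adj E x w
  · rcases h with h | h
    · exact Or.inl (Or.inr h)
    · exact Or.inl (Or.inl h)
  · exact Or.inr ⟨hwx, h, z, hz, hw⟩

/-- If every vertex of `Mb(x) \ S` is a parent of every vertex of `S`, condition (ii) for
`S` says that no vertex of `Mb(x) \ S` owes its place in `Mb(x)` to children in `S` only. -/
lemma coparent_outside {E : V → V → Prop} (hacy : Acyclic E) {x : V} {S : Finset V}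
    (hS : ∀ s ∈ S, E x s) (hpar : ∀ s ∈ S, ∀ w ∈ Mb E x, w ∉ S → E w s)
    {y : V} (hy : y ∈ Mb E x) (hyS : y ∉ S)
    (hsep : ¬ DSep E x y (Mb E x \ ({y} ∪ ↑S))) :
    Adj E x y ∨ ∃ w, w ∉ S ∧ E x w ∧ E y w := by
  by_contra hcon
  push Not at hcon
  obtain ⟨hadj, hcp⟩ := hcon
  have hdesc : ∀ s ∈ S, ∀ w, w ∈ Mb E x → w ∉ S → ¬ Desc E s w := fun s hs w hw hwS h =>
    hacy s (Relation.TransGen.tail h (hpar s hs w hw hwS))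
  have hxy : x ≠ y := fun h => not_mem_mb hacy x (h ▸ hy)
  obtain ⟨f, n, hf, h0, hn⟩ := exists_openPath hsep hxy
    (fun h => not_mem_mb hacy x h.1) (fun h => h.2 (Or.inl rfl))
  have hmem : ∀ w, w ∈ Mb E x → w ∉ S → w ≠ y → w ∈ Mb E x \ ({y} ∪ ↑S) := fun w h1 h2 h3 =>
    ⟨h1, by simp [h2, h3]⟩
  have hn0 : 0 < n := by
    rcases Nat.eq_zero_or_pos n with rfl | h
    · exact absurd (h0.symm.trans hn) hxy
    · exact h
  have h01 := hf.2.1 0 hn0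
  rw [zero_add, h0] at h01
  have h1y : f 1 ≠ y := fun h => hadj (h ▸ h01)
  have hn1 : 1 < n := by
    rcases Nat.lt_or_ge 1 n with h | h
    · exact h
    · obtain rfl : n = 1 := by omega
      exact absurd hn h1y
  obtain ⟨hc, hnc⟩ := hf.2.2 0 (by omega)
  simp only [zero_add, h0] at hc hnc
  rcases h01 with h01 | h01
  · by_cases h1S : f 1 ∈ S
    · have key : (∃ d ∈ Mb E x \ ({y} ∪ ↑S), Desc E (f 1) d) ∨ Desc E (f 1) y := by
        rcases hf.2.1 1 hn1 with h12 | h12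
        · rcases hf.descend_last h12 hn1 with h | ⟨h, -⟩
          · exact Or.inl h
          · exact Or.inr (hn ▸ h)
        · rcases ancOf_iff.1 (hc ⟨h01, h12⟩) with h | ⟨d, h, hd⟩
          · exact absurd (Or.inr h1S) h.2
          · exact Or.inl ⟨d, hd, h⟩
      rcases key with ⟨d, hd, h⟩ | h
      · exact hdesc _ h1S d hd.1 (fun h' => hd.2 (Or.inr h')) h
      · exact hdesc _ h1S y hy hyS h
    · have h1T := hmem (f 1) (Or.inl (Or.inr h01)) h1S h1y
      have h21 : E (f 2) (f 1) := by
        by_contra h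
        exact hnc (fun h' => h h'.2) h1T
      have h2x : f 2 ≠ x := fun h => by
        have := hf.1 2 (by omega) 0 (by omega) (h.trans h0.symm)
        omega
      have h2y : f 2 ≠ y := fun h => hcp (f 1) h1S h01 (h ▸ h21)
      have hn2 : 2 < n := by
        rcases Nat.lt_or_ge 2 n with h | h
        · exact h
        · obtain rfl : n = 2 := by omega
          exact absurd hn h2y
      have h2S : f 2 ∉ S := fun h =>
        hdesc _ h (f 1) (Or.inl (Or.inr h01)) h1S (Relation.TransGen.single h21)
      exact (hf.2.2 1 (by omega)).2 (fun h => hacy.asymm h21 h.1)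
        (hmem (f 2) (mem_mb_of_parent_of_child h01 h21 h2x) h2S h2y)
  · exact hnc (fun h => hacy.asymm h01 h.1)
      (hmem (f 1) (Or.inl (Or.inl h01)) (fun h => hacy.asymm h01 (hS _ h)) h1y)

/-- If a child `z` of `x` outside `S` has no descendant in `Mb(x) \ S`, and no vertex of `S`
is a parent of `z`, then condition (i) for `S` makes `z` a child of all of `Mb(x) \ S`. -/
lemma parent_of_extremal {E : V → V → Prop} (hacy : Acyclic E) {x : V} {S : Finset V}
    (hS : ∀ s ∈ S, E x s) {z : V} (hz : E x z)
    (hzd : ∀ w ∈ Mb E x, w ∉ S → ¬ Desc E z w) (hSz : ∀ s ∈ S, ¬ E s z)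
    {w : V} (hw : w ∈ Mb E x) (hwS : w ∉ S) (hwz : w ≠ z)
    (hsep : ¬ DSep E z w ((Mb E x ∪ {x}) \ ({z, w} ∪ ↑S))) : E w z := by
  by_contra hne
  have hadj : ¬ Adj E z w := by
    rintro (h | h)
    · exact hzd w hw hwS (Relation.TransGen.single h)
    · exact hne h
  obtain ⟨f, n, hf, h0, hn⟩ := exists_openPath hsep hwz.symm (fun h => h.2 (by simp))
    (fun h => h.2 (by simp))
  have hn0 : 0 < n := by
    rcases Nat.eq_zero_or_pos n with rfl | h
    · exact absurd (hn.symm.trans h0) hwz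
    · exact h
  have h01 := hf.2.1 0 hn0
  rw [zero_add, h0] at h01
  have h1w : f 1 ≠ w := fun h => hadj (h ▸ h01)
  have hn1 : 1 < n := by
    rcases Nat.lt_or_ge 1 n with h | h
    · exact h
    · obtain rfl : n = 1 := by omega
      exact absurd hn h1w
  rcases h01 with h01 | h01
  · rw [← h0] at h01
    rcases hf.descend_last h01 hn0 with ⟨d, ⟨hd | hd, hd2⟩, h⟩ | ⟨h, -⟩
    · exact hzd d hd (fun h' => hd2 (Or.inr h')) (h0 ▸ h)
    · obtain rfl : d = x := hd
      exact hacy d (Relation.TransGen.head hz (h0 ▸ h))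
    · exact hzd w hw hwS (h0 ▸ hn ▸ h)
  · have h1z := hacy.ne h01
    have h1S : f 1 ∉ S := fun h => hSz _ h h01
    have hmem : f 1 ∈ Mb E x ∪ {x} := by
      by_cases h : f 1 = x
      · exact Or.inr h
      · exact Or.inl (mem_mb_of_parent_of_child hz h01 h)
    refine (hf.2.2 0 (by omega)).2 (fun h => ?_) ⟨hmem, by simp [h1z, h1w, h1S]⟩
    rw [zero_add, h0] at h
    exact hacy.asymm h01 h.1

lemma exists_sink [Finite V] {E : V → V → Prop} (hacy : Acyclic E) (A : Set V)
    (hA : A.Nonempty) : ∃ z ∈ A, ∀ w ∈ A, ¬ Desc E z w := by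
  have : IsTrans V (fun a b => Relation.TransGen E b a) := ⟨fun _ _ _ h1 h2 => h2.trans h1⟩
  have : Std.Irrefl (fun a b => Relation.TransGen E b a) := ⟨fun a h => hacy a h⟩
  have hwf : WellFounded (fun a b => Relation.TransGen E b a) :=
    Finite.wellFounded_of_trans_of_irrefl _
  obtain ⟨z, hz, h⟩ := hwf.has_min A hA
  exact ⟨z, hz, h⟩

/-- The children of `x` form a clique and all other members of `Mb(x)` are parents of every child. -/
def Rigid (E : V → V → Prop) (x : V) : Prop :=
  ∀ z, E x z → ∀ w ∈ Mb E x, (E x w → w ≠ z → Adj E w z) ∧ (¬ E x w → E w z)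

/-- `S` is a clique of children of `x`, and every vertex of `Mb(x) \ S` is a parent of
every vertex of `S`. -/
def Peeled (E : V → V → Prop) (x : V) (S : Finset V) : Prop :=
  (∀ s ∈ S, E x s) ∧ (∀ s ∈ S, ∀ t ∈ S, s ≠ t → Adj E s t) ∧
    ∀ s ∈ S, ∀ w ∈ Mb E x, w ∉ S → E w s

lemma peeled_insert [Finite V] [DecidableEq V] {E : V → V → Prop} (hacy : Acyclic E) {m : ℕ}
    (hclq : CliqueNumLE E m) {x : V} (hx : RemCond E x (m - 2)) {S : Finset V}
    (hS : Peeled E x S) {c : V} (hc : E x c) (hcS : c ∉ S) :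
    ∃ z, z ∉ S ∧ Peeled E x (insert z S) := by
  obtain ⟨hch, hcl, hpar⟩ := hS
  obtain ⟨z, ⟨hz, hzS⟩, hmax⟩ := exists_sink hacy {z | E x z ∧ z ∉ S} ⟨c, hc, hcS⟩
  have hzM : z ∈ Mb E x := Or.inl (Or.inr hz)
  have hxS : x ∉ S := fun h => hacy.ne (hch x h) rfl
  have hcard : S.card ≤ m - 2 := by
    have h1 : ∀ a ∈ insert z S, ∀ b ∈ insert z S, a ≠ b → Adj E a b := by
      intro a ha b hb hab
      rcases Finset.mem_insert.1 ha with rfl | ha' <;>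
        rcases Finset.mem_insert.1 hb with rfl | hb'
      · exact absurd rfl hab
      · exact Or.inl (hpar b hb' a hzM hzS)
      · exact Or.inr (hpar a ha' b hzM hzS)
      · exact hcl a ha' b hb' hab
    have h2 : ∀ a ∈ insert z S, E x a := by
      intro a ha
      rcases Finset.mem_insert.1 ha with rfl | ha
      · exact hz
      · exact hch a ha
    have h3 : x ∉ insert z S := fun h => hacy.ne (h2 x h) rfl
    have := hclq (insert x (insert z S)) (by
      intro a ha b hb hab
      rcases Finset.mem_insert.1 ha with rfl | ha' <;>
        rcases Finset.mem_insert.1 hb with rfl | hb'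
      · exact absurd rfl hab
      · exact Or.inl (h2 b hb')
      · exact Or.inr (h2 a ha')
      · exact h1 a ha' b hb' hab)
    rw [Finset.card_insert_of_notMem h3, Finset.card_insert_of_notMem hzS] at this
    omega
  obtain ⟨hi, hii⟩ := hx S (fun s hs => Or.inl (Or.inr (hch s hs))) hcard
  have hzd : ∀ w ∈ Mb E x, w ∉ S → ¬ Desc E z w := by
    intro w hw hwS hd
    rcases coparent_outside hacy hch hpar hw hwS (hii w ⟨hw, hwS⟩) with (h | h) | ⟨u, hu, h1, h2⟩
    · exact hmax w ⟨h, hwS⟩ hd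
    · exact hacy x ((Relation.TransGen.head hz hd).tail h)
    · exact hmax u ⟨h1, hu⟩ (Relation.TransGen.tail hd h2)
  have hSz : ∀ s ∈ S, ¬ E s z := fun s hs h => hacy.asymm h (hpar s hs z hzM hzS)
  have hnew : ∀ w ∈ Mb E x, w ∉ S → w ≠ z → E w z := fun w hw hwS hwz =>
    parent_of_extremal hacy hch hz hzd hSz hw hwS hwz (hi z ⟨hzM, hzS⟩ w ⟨hw, hwS⟩ hwz.symm)
  refine ⟨z, hzS, ?_, ?_, ?_⟩
  · intro s hs
    rcases Finset.mem_insert.1 hs with rfl | hs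
    · exact hz
    · exact hch s hs
  · intro a ha b hb hab
    rcases Finset.mem_insert.1 ha with rfl | ha' <;>
        rcases Finset.mem_insert.1 hb with rfl | hb'
    · exact absurd rfl hab
    · exact Or.inl (hpar b hb' a hzM hzS)
    · exact Or.inr (hpar a ha' b hzM hzS)
    · exact hcl a ha' b hb' hab
  · intro s hs w hw hwI
    rw [Finset.mem_insert, not_or] at hwI
    rcases Finset.mem_insert.1 hs with rfl | hs
    · exact hnew w hw hwI.2 hwI.1
    · exact hpar s hs w hw hwI.2

lemma rigid_of_remCond [Fintype V] {E : V → V → Prop} (hacy : Acyclic E) {m : ℕ}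
    (hclq : CliqueNumLE E m) {x : V} (hx : RemCond E x (m - 2)) : Rigid E x := by
  classical
  have hempty : Peeled E x ∅ := ⟨by simp, by simp, by simp⟩
  obtain ⟨S, hS, hmax⟩ := Finset.exists_max_image
    (Finset.univ.filter fun S : Finset V => Peeled E x S) Finset.card ⟨∅, by simpa using hempty⟩
  simp only [Finset.mem_filter, Finset.mem_univ, true_and] at hS hmax
  have hall : ∀ c, E x c → c ∈ S := by
    intro c hc
    by_contra hcS
    obtain ⟨z, hz, hP⟩ := peeled_insert hacy hclq hx hS hc hcS
    have := hmax _ hP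
    rw [Finset.card_insert_of_notMem hz] at this
    omega
  intro z hz w hw
  exact ⟨fun h hne => hS.2.1 w (hall w h) z (hall z hz) hne,
    fun h => hS.2.2 z (hall z hz) w hw fun h' => h (hS.1 w h')⟩

/-! ### The structure implies removability -/

lemma Rigid.parent_child {E : V → V → Prop} (hacy : Acyclic E) {x : V} (h : Rigid E x)
    {u v : V} (hu : E u x) (hv : E x v) : E u v :=
  (h v hv u (Or.inl (Or.inl hu))).2 fun h' => hacy.asymm hu h'

/-- For children `u → v` of `x`, the parents of `u` are parents of `v`. -/
lemma Rigid.parents_subset {E : V → V → Prop} (hacy : Acyclic E) {x : V} (h : Rigid E x)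
    {u v w : V} (hu : E x u) (hv : E x v) (huv : E u v) (hw : E w u) (hwx : w ≠ x) : E w v := by
  obtain ⟨h1, h2⟩ := h v hv w (mem_mb_of_parent_of_child hu hw hwx)
  by_cases hxw : E x w
  · have hwv : w ≠ v := by
      rintro rfl
      exact hacy.asymm huv hw
    rcases h1 hxw hwv with h3 | h3
    · exact h3
    · exact (hacy w (((Relation.TransGen.single hw).tail huv).tail h3)).elim
  · exact h2 hxw

lemma del_acyclic {E : V → V → Prop} (hacy : Acyclic E) (x : V) : Acyclic (Del E x) :=
  fun v h => hacy v (Relation.TransGen.mono (r := Del E x) (fun _ _ h => h.1) _ _ h)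

lemma rtg_del {E : V → V → Prop} (hacy : Acyclic E) {x : V} (hR : Rigid E x) {d v : V}
    (hd : d ≠ x) (h : Relation.ReflTransGen E v d) :
    (v ≠ x → Relation.ReflTransGen (Del E x) v d) ∧
      (v = x → ∃ z, E x z ∧ Relation.ReflTransGen (Del E x) z d) := by
  induction h using Relation.ReflTransGen.head_induction_on with
  | refl => exact ⟨fun _ => Relation.ReflTransGen.refl, fun h => absurd h hd⟩
  | head hab _ ih =>
    rename_i a b _
    constructor
    · intro ha
      by_cases hb : b = x
      · obtain ⟨z, hz, h⟩ := ih.2 hb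
        subst hb
        exact Relation.ReflTransGen.head
          ⟨hR.parent_child hacy hab hz, ha, (hacy.ne hz).symm⟩ h
      · exact Relation.ReflTransGen.head ⟨hab, ha, hb⟩ (ih.1 hb)
    · rintro rfl
      exact ⟨b, hab, ih.1 (hacy.ne hab).symm⟩

lemma ancOf_del {E : V → V → Prop} (hacy : Acyclic E) {x : V} (hR : Rigid E x) {T : Set V}
    (hxT : x ∉ T) {v : V} (hv : v ≠ x) (h : AncOf E T v) : AncOf (Del E x) T v := by
  obtain ⟨d, hd, h⟩ := h
  exact ⟨d, hd, (rtg_del hacy hR (fun h' => hxT (h' ▸ hd)) h).1 hv⟩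

lemma reach_of_del {E : V → V → Prop} {x : V} {T : Set V} {y v : V} {b : Bool}
    (h : Reach (Del E x) T y v b) : Reach E T y v b := by
  induction h with
  | start => exact Reach.start
  | down _ hT he ih => exact ih.down hT he.1
  | collide _ hA he ih =>
    obtain ⟨d, hd, h⟩ := hA
    exact ih.collide ⟨d, hd, Relation.ReflTransGen.mono (r := Del E x) (fun _ _ h => h.1) _ _ h⟩ he.1
  | up _ hT he ih => exact ih.up hT he.1

/-- Some child `u` of `x` is reachable, in the graph without `x`, by a walk that could be
continued against the edge `x → u`. -/
def ExitsUp (E : V → V → Prop) (x : V) (T : Set V) (y : V) : Prop :=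
  ∃ u, E x u ∧ ((Reach (Del E x) T y u true ∧ AncOf (Del E x) T u) ∨
    (Reach (Del E x) T y u false ∧ u ∉ T))

/-- What remains, after deleting `x`, of arriving at `v` in the full graph with flag `b`.
Away from `x` the flag `true` may have been lost; then either the walk
arriving with flag `false` allows all continuations, or `v` is a child of `x` for which every
continuation against an edge is available in another way. At `x` itself, the invariant records from
where `x` could be entered. -/
def Trace (E : V → V → Prop) (x : V) (T : Set V) (y v : V) : Bool → Prop
  | true => (v = x → ∃ u, E u x ∧ u ∉ T ∧ ∃ b, Reach (Del E x) T y u b) ∧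
      (v ≠ x → Reach (Del E x) T y v true ∨ (Reach (Del E x) T y v false ∧ v ∉ T) ∨
        (ExitsUp E x T y ∧ E x v ∧ Reach (Del E x) T y v false ∧
          ∀ q, Del E x q v → Reach (Del E x) T y q false))
  | false => (v = x → ExitsUp E x T y) ∧ (v ≠ x → Reach (Del E x) T y v false)

lemma Trace.reach {E : V → V → Prop} {x : V} {T : Set V} {y v : V} {b : Bool}
    (h : Trace E x T y v b) (hv : v ≠ x) : ∃ b, Reach (Del E x) T y v b := by
  cases b with
  | false => exact ⟨_, h.2 hv⟩
  | true =>
    rcases h.2 hv with h | h | h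
    · exact ⟨_, h⟩
    · exact ⟨_, h.1⟩
    · exact ⟨_, h.2.2.1⟩

/-- A walk entering `x` from a child and leaving it to a child `v` can be rerouted. -/
lemma ExitsUp.trace {E : V → V → Prop} (hacy : Acyclic E) {x : V} (hR : Rigid E x) {T : Set V}
    {y v : V} (h : ExitsUp E x T y) (hv : E x v) : Trace E x T y v true := by
  have hvx : v ≠ x := (hacy.ne hv).symm
  refine ⟨fun h => absurd h hvx, fun _ => ?_⟩
  have h' := h
  obtain ⟨u, hu, hA⟩ := h'
  have hux : u ≠ x := (hacy.ne hu).symm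
  by_cases huv : u = v
  · subst huv
    rcases hA with hA | hA
    · exact Or.inl hA.1
    · exact Or.inr (Or.inl hA)
  rcases (hR v hv u (Or.inl (Or.inr hu))).1 hu huv with he | he
  · left
    rcases hA with ⟨hA, -⟩ | hA
    · -- `u` would become a non-collider, so the walk is rerouted from the predecessor of `u`
      cases hA with
      | down h1 h2 h3 =>
        exact h1.down h2 ⟨hR.parents_subset hacy hu hv he h3.1 h3.2.1, h3.2.1, hvx⟩
    · exact hA.1.down hA.2 ⟨he, hux, hvx⟩
  · right; right
    have hpar : ∀ q, Del E x q u → Reach (Del E x) T y q false := by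
      intro q hq
      rcases hA with hA | hA
      · exact hA.1.collide hA.2 hq
      · exact hA.1.up hA.2 hq
    refine ⟨h, hv, hpar v ⟨he, hvx, hux⟩, fun q hq => hpar q ⟨?_, hq.2.1, hux⟩⟩
    exact hR.parents_subset hacy hv hu he hq.1 hq.2.1

lemma reach_del {E : V → V → Prop} (hacy : Acyclic E) {x : V} (hR : Rigid E x) {T : Set V}
    (hxT : x ∉ T) {y : V} (hy : y ≠ x) {v : V} {b : Bool} (h : Reach E T y v b) :
    Trace E x T y v b := by
  induction h with
  | start => exact ⟨fun h => absurd h hy, fun _ => Reach.start⟩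
  | down _ hT he ih =>
    rename_i v w b _
    by_cases hv : v = x
    · subst hv
      cases b with
      | false => exact (ih.1 rfl).trace hacy hR he
      | true =>
        have hw := (hacy.ne he).symm
        obtain ⟨u, hu, huT, b, hb⟩ := ih.1 rfl
        exact ⟨fun h => absurd h hw, fun _ => Or.inl (hb.down huT
          ⟨hR.parent_child hacy hu he, hacy.ne hu, hw⟩)⟩
    · obtain ⟨b', hb'⟩ := ih.reach hv
      refine ⟨?_, fun hw => Or.inl (hb'.down hT ⟨he, hv, hw⟩)⟩
      rintro rfl
      exact ⟨v, he, hT, b', hb'⟩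
  | collide _ hA he ih =>
    rename_i v w _
    by_cases hv : v = x
    · subst hv
      have hw := hacy.ne he
      refine ⟨fun h => absurd h hw, fun _ => ?_⟩
      obtain ⟨u, hu, huT, b, hb⟩ := ih.1 rfl
      obtain ⟨d, hd, h⟩ := hA
      -- the collider `x` is replaced by its child `z` leading to `T`
      obtain ⟨z, hz, hzd⟩ := (rtg_del hacy hR (fun h' => hxT (h' ▸ hd)) h).2 rfl
      have hzx := (hacy.ne hz).symm
      exact (hb.down huT ⟨hR.parent_child hacy hu hz, hacy.ne hu, hzx⟩).collide ⟨d, hd, hzd⟩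
        ⟨hR.parent_child hacy he hz, hw, hzx⟩
    · have hA' := ancOf_del hacy hR hxT hv hA
      constructor
      · rintro rfl
        rcases ih.2 hv with h | h | h
        · exact ⟨v, he, Or.inl ⟨h, hA'⟩⟩
        · exact ⟨v, he, Or.inr h⟩
        · exact h.1
      · intro hw
        have hq : Del E x w v := ⟨he, hw, hv⟩
        rcases ih.2 hv with h | h | h
        · exact h.collide hA' hq
        · exact h.1.up h.2 hq
        · exact h.2.2.2 w hq
  | up _ hT he ih =>
    rename_i v w _
    by_cases hv : v = x
    · subst hv
      have hw := hacy.ne he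
      refine ⟨fun h => absurd h hw, fun _ => ?_⟩
      -- here `w → x → u`, so `w` is a parent of the child `u`
      obtain ⟨u, hu, hA⟩ := ih.1 rfl
      have hq : Del E v w u := ⟨hR.parent_child hacy he hu, hw, (hacy.ne hu).symm⟩
      rcases hA with hA | hA
      · exact hA.1.collide hA.2 hq
      · exact hA.1.up hA.2 hq
    · constructor
      · rintro rfl
        exact ⟨v, he, Or.inr ⟨ih.2 hv, hT⟩⟩
      · exact fun hw => (ih.2 hv).up hT ⟨he, hw, hv⟩

lemma Rigid.removable {E : V → V → Prop} (hacy : Acyclic E) {x : V} (hR : Rigid E x) :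
    Removable E x := by
  intro y z hy hz _ T hxT
  rw [dsep_iff_reach hacy, dsep_iff_reach (del_acyclic hacy x)]
  refine and_congr_right fun _ => and_congr_right fun _ => and_congr_right fun _ =>
    not_congr ⟨?_, ?_⟩
  · rintro ⟨b, hb⟩
    exact (reach_del hacy hR hxT hy hb).reach hz
  · rintro ⟨b, hb⟩
    exact ⟨b, reach_of_del hb⟩

/-! ### Sinks satisfy the condition -/

lemma remCond_of_sink {E : V → V → Prop} (hacy : Acyclic E) {x : V} (hx : ∀ w, ¬ E x w) (t : ℕ) :
    RemCond E x t := by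
  have hpa : ∀ y ∈ Mb E x, E y x := by
    rintro y ((h | h) | ⟨-, -, w, h, -⟩)
    · exact h
    · exact (hx y h).elim
    · exact (hx w h).elim
  intro S hS _
  constructor
  · intro y hy z hz hyz hd
    rw [dsep_iff_reach hacy] at hd
    obtain ⟨-, h1, -, h2⟩ := hd
    have hy' := hpa y hy.1
    have hz' := hpa z hz.1
    refine h2 ⟨false, ((Reach.start.down h1 hy').collide ⟨x, ⟨Or.inr rfl, ?_⟩, .refl⟩ hz')⟩
    rintro ((h | h) | h)
    · exact hacy.ne hy' h.symm
    · exact hacy.ne hz' h.symm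
    · exact not_mem_mb hacy x (hS h)
  · intro y hy hd
    rw [dsep_iff_reach hacy] at hd
    obtain ⟨-, h1, -, h2⟩ := hd
    exact h2 ⟨false, Reach.start.up h1 (hpa y hy.1)⟩

/-- sufficient removability condition under a clique-number bound,
and nonemptiness of the set of vertices satisfying it. -/
theorem stmt1 [Fintype V] (E : V → V → Prop) (hacy : Acyclic E) (m : ℕ)
    (hclq : CliqueNumLE E m) :
    (∀ X : V, RemCond E X (m - 2) → Removable E X) ∧
    (Nonempty V → ∃ X : V, RemCond E X (m - 2)) := by
  refine ⟨fun X hX => (rigid_of_remCond hacy hclq hX).removable hacy, fun hV => ?_⟩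
  obtain ⟨z, -, hz⟩ := exists_sink hacy Set.univ (Set.univ_nonempty (α := V))
  exact ⟨z, remCond_of_sink hacy (fun w h => hz w trivial (Relation.TransGen.single h)) _⟩
end

section
/- In a finite DAG G = (V,E), every vertex X with Ch(X) = ∅ is removable in G. Consequently, every finite DAG with nonempty vertex set has at least one removable vertex. -/
/-!
A sink `x` can occur on a path only as an endpoint or as a collider. As a collider it has no
descendants, so it blocks the path for every `S` not containing it; hence only paths that avoid `x`
matter when testing d-separation of other vertices. These are exactly the paths of `Del E x`
(`isPath_del_iff`). Deleting `x` does not change whether they are blocked (`blocked_del_iff`),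
because a directed path to a vertex other than `x` never passes through the sink `x`
(`desc_del_iff`). A finite DAG has a sink because the reversed reachability relation is
well-founded.
-/

open Set

variable {V : Type*}

/-- A directed path ending outside the sink `x` cannot visit `x`, so it survives the deletion. -/
theorem desc_del_iff {E : V → V → Prop} {x : V} (hx : ∀ y, ¬ E x y) {a d : V} (hd : d ≠ x) :
    Desc (Del E x) a d ↔ Desc E a d := by
  constructor
  · exact Relation.TransGen.mono (r := Del E x) (fun _ _ hab => hab.1) a d
  · intro h
    unfold Desc at h ⊢
    induction h with
    | single hab => exact .single ⟨hab, fun h => hx _ (h ▸ hab), hd⟩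
    | @tail b c _ hbc ih =>
      have hb : b ≠ x := fun h => hx _ (h ▸ hbc)
      exact (ih hb).tail ⟨hbc, hb, hd⟩

theorem isPath_del_iff {E : V → V → Prop} {x : V} {n : ℕ} {p : Fin (n + 1) → V}
    (hp : ∀ i, p i ≠ x) : IsPath (Del E x) p ↔ IsPath E p := by
  simp [IsPath, Adj, Del, hp]

theorem blocked_del_iff {E : V → V → Prop} {x : V} (hx : ∀ y, ¬ E x y) {S : Set V} (hS : x ∉ S)
    {n : ℕ} {p : Fin (n + 1) → V} (hp : ∀ i, p i ≠ x) :
    Blocked (Del E x) S p ↔ Blocked E S p := by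
  have key : ∀ a, (∀ d, Desc (Del E x) a d → d ∉ S) ↔ ∀ d, Desc E a d → d ∉ S := by
    refine fun a => forall_congr' fun d => ?_
    by_cases hd : d = x
    · simp [hd, hS]
    · rw [desc_del_iff hx hd]
  simp only [Blocked, key]
  simp [Del, hp]

/-- A path of positive length in `Del E x` avoids `x`, since every vertex on it has a neighbor. -/
theorem IsPath.ne_of_del {E : V → V → Prop} {x : V} {n : ℕ} {p : Fin (n + 1) → V}
    (hn : 0 < n) (hp : IsPath (Del E x) p) (i : Fin (n + 1)) : p i ≠ x := by
  obtain ⟨m, rfl⟩ : ∃ m, n = m + 1 := ⟨n - 1, by omega⟩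
  induction i using Fin.cases with
  | zero => rcases hp.2 0 with h | h <;> [exact h.2.1; exact h.2.2]
  | succ i => rcases hp.2 i with h | h <;> [exact h.2.2; exact h.2.1]

/-- A sink in the interior of a path is a collider without descendants, so it blocks the path. -/
theorem blocked_of_sink {E : V → V → Prop} {x : V} (hx : ∀ y, ¬ E x y) {S : Set V} (hS : x ∉ S)
    {n : ℕ} {p : Fin (n + 1) → V} (hp : IsPath E p) (h0 : p 0 ≠ x) (hl : p (Fin.last n) ≠ x)
    {i : Fin (n + 1)} (hi : p i = x) : Blocked E S p := by
  obtain ⟨k, hk⟩ := i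
  have hk0 : k ≠ 0 := by rintro rfl; exact h0 hi
  have hkn : k ≠ n := by rintro rfl; exact hl hi
  obtain ⟨m, rfl⟩ : ∃ m, k = m + 1 := ⟨k - 1, by omega⟩
  have hprev : Adj E (p ⟨m, by omega⟩) (p ⟨m + 1, hk⟩) := hp.2 ⟨m, by omega⟩
  have hnext : Adj E (p ⟨m + 1, hk⟩) (p ⟨m + 1 + 1, by omega⟩) := hp.2 ⟨m + 1, by omega⟩
  rw [hi] at hprev hnext
  refine ⟨m + 1, by omega, by omega, Or.inr ⟨⟨?_, ?_⟩, ?_, ?_⟩⟩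
  · rw [hi]; exact hprev.resolve_right (hx _)
  · rw [hi]; exact hnext.resolve_left (hx _)
  · rwa [hi]
  · rw [hi]
    intro d hd
    obtain ⟨c, hc, -⟩ := Relation.TransGen.head'_iff.1 hd
    exact absurd hc (hx c)

theorem removable_of_sink {E : V → V → Prop} {x : V} (hx : ∀ y, ¬ E x y) : Removable E x := by
  intro y z hy hz _ S hS
  constructor
  · rintro ⟨h1, h2, h3, h⟩
    refine ⟨h1, h2, h3, fun n p hn hp h0 hl => ?_⟩
    have hav := hp.ne_of_del hn
    exact (blocked_del_iff hx hS hav).2 (h n p hn ((isPath_del_iff hav).1 hp) h0 hl)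
  · rintro ⟨h1, h2, h3, h⟩
    refine ⟨h1, h2, h3, fun n p hn hp h0 hl => ?_⟩
    by_cases hav : ∀ i, p i ≠ x
    · exact (blocked_del_iff hx hS hav).1 (h n p hn ((isPath_del_iff hav).2 hp) h0 hl)
    · push Not at hav
      obtain ⟨i, hi⟩ := hav
      exact blocked_of_sink hx hS hp (h0 ▸ hy) (hl ▸ hz) hi

theorem exists_sink_s2 [Finite V] [Nonempty V] {E : V → V → Prop} (hacy : Acyclic E) :
    ∃ x, ∀ y, ¬ E x y := by
  let r : V → V → Prop := fun a b => Relation.TransGen E b a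
  have : IsTrans V r := ⟨fun _ _ _ hab hbc => hbc.trans hab⟩
  have : Std.Irrefl r := ⟨hacy⟩
  obtain ⟨x, -, hx⟩ :=
    (Finite.wellFounded_of_trans_of_irrefl r).has_min Set.univ Set.univ_nonempty
  exact ⟨x, fun y hy => hx y trivial (.single hy)⟩

/-- vertices with no children are removable; every finite nonempty DAG
has a removable vertex. -/
theorem stmt2 [Fintype V] (E : V → V → Prop) (hacy : Acyclic E) :
    (∀ X : V, Ch E X = ∅ → Removable E X) ∧
    (Nonempty V → ∃ X : V, Removable E X) := by
  have sink : ∀ X : V, Ch E X = ∅ ↔ ∀ y, ¬ E X y := fun X => Set.eq_empty_iff_forall_notMem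
  refine ⟨fun X hX => removable_of_sink ((sink X).1 hX), fun _ => ?_⟩
  obtain ⟨X, hX⟩ := exists_sink_s2 hacy
  exact ⟨X, removable_of_sink hX⟩
end

section
/- Let G = (V,E) be a finite DAG with ω(G) ≤ m and let X ∈ V. Suppose that for every S ⊆ Mb(X) with |S| ≤ m−2 the following two conditions hold: (i) for all distinct Y,Z ∈ Mb(X)∖S, the set (Mb(X)∪{X})∖({Y,Z}∪S) does not d-separate Y and Z in G; and (ii) for all Y ∈ Mb(X)∖S, the set Mb(X)∖({Y}∪S) does not d-separate X and Y in G. Then X has at most m−1 children, i.e., |Ch(X)| ≤ m−1. -/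
/-!
Fix a linear order on `V` extending the ancestor relation, so that edges go upwards.

* A co-parent `W` of `X` lying above `X` has more than `m - 2` children of `X` above it. Otherwise
  the same fails for the largest co-parent, so take `W` to be that one and let `S` be the set of
  children of `X` above `W`. Every vertex of `Mb(X) ∖ ({W} ∪ S)` lies below `W`, and this set
  d-separates `X` and `W` (`dsep_of_last_coparent`), against condition (ii).
* A child `Z` of `X` with at most `m - 2` children of `X` above it is adjacent to every earlier
  child `Y`. By the first point all co-parents lie below `Z`. With `S` the set of children above
  `Z`, the conditioning set in (i) lies below `Z` and contains all parents of `Z`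
  (if `Y` is not one of them), so it d-separates `Z` and `Y` by the local Markov property
  (`dsep_of_parents`).

If `X` had at least `m` children, the last `m` of them together with `X` would therefore form a
clique of size `m + 1`.

Both d-separation facts rest on `blocked_of_directed_start`: a path that starts along an edge into
a vertex above its endpoint must turn at a collider, and that collider has no descendant among the
conditioned vertices when these all lie lower.
-/


open Set

variable {V : Type*}

/-- A DAG admits a topological order: a linear order along which all edges increase. -/
theorem exists_topological_order (E : V → V → Prop) (hacy : Acyclic E) :
    ∃ _ : LinearOrder V, ∀ a b : V, E a b → a < b := by
  let P : PartialOrder V :=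
    { le := Relation.ReflTransGen E
      le_refl := fun a => Relation.ReflTransGen.refl
      le_trans := fun a b c => Relation.ReflTransGen.trans
      le_antisymm := by
        intro a b hab hba
        rcases Relation.reflTransGen_iff_eq_or_transGen.1 hab with h | h
        · exact h.symm
        · exact absurd (h.trans_left hba) (hacy a) }
  have key : ∀ a b : V, E a b → (toLinearExtension a : LinearExtension V) < toLinearExtension b := by
    intro a b h
    refine lt_of_le_of_ne (toLinearExtension.monotone' (Relation.ReflTransGen.single h)) ?_
    intro he
    have hab : a = b := he
    subst hab
    exact hacy a (Relation.TransGen.single h)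
  exact ⟨(inferInstance : LinearOrder (LinearExtension V)), key⟩

theorem Desc.lt_of_order [LinearOrder V] {E : V → V → Prop} (hlt : ∀ a b : V, E a b → a < b)
    {a b : V} (h : Desc E a b) : a < b := by
  induction h with
  | single h => exact hlt _ _ h
  | tail _ h ih => exact ih.trans (hlt _ _ h)

/-- A path starting with an edge `p 0 → p 1`, whose endpoint and conditioned vertices all precede
`p 1`, is blocked: its first collider is a descendant of `p 1` or `p 1` itself. -/
theorem blocked_of_directed_start [LinearOrder V] {E : V → V → Prop}
    (hlt : ∀ a b : V, E a b → a < b) {T : Set V} {n : ℕ} (hn : 0 < n) {p : Fin (n + 1) → V}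
    (hp : IsPath E p) (h01 : E (p 0) (p ⟨1, by omega⟩))
    (hlast : p (Fin.last n) < p ⟨1, by omega⟩) (hT : ∀ t ∈ T, t < p ⟨1, by omega⟩) :
    Blocked E T p := by
  by_contra hb
  -- Without a blocked collider the path can only continue along directed edges.
  have key : ∀ k : ℕ, ∀ hk : k < n,
      E (p ⟨k, by omega⟩) (p ⟨k + 1, by omega⟩) ∧
        p ⟨1, by omega⟩ ≤ p ⟨k + 1, by omega⟩ := by
    intro k
    induction k with
    | zero => exact fun _ => ⟨h01, le_rfl⟩
    | succ k ih =>
      intro hk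
      obtain ⟨h1, h2⟩ := ih (by omega)
      have hadj : Adj E (p ⟨k + 1, by omega⟩) (p ⟨k + 1 + 1, by omega⟩) := hp.2 ⟨k + 1, hk⟩
      rcases hadj with h | h
      · exact ⟨h, h2.trans (hlt _ _ h).le⟩
      · refine absurd ⟨k + 1, by omega, hk, Or.inr ⟨⟨h1, h⟩, ?_, ?_⟩⟩ hb
        · exact fun hmem => absurd (hT _ hmem) (not_lt.2 h2)
        · exact fun d hd hmem =>
            absurd (hT _ hmem) (not_lt.2 (h2.trans (Desc.lt_of_order hlt hd).le))
  obtain ⟨j, rfl⟩ : ∃ j, n = j + 1 := ⟨n - 1, by omega⟩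
  exact absurd hlast (not_lt.2 (key j (by omega)).2)

/-- Local Markov property: `z` is d-separated from an earlier non-parent `y` by any set of earlier
vertices containing the parents of `z`. -/
theorem dsep_of_parents [LinearOrder V] {E : V → V → Prop}
    (hlt : ∀ a b : V, E a b → a < b) {T : Set V} {y z : V} (hyz : y < z) (hE : ¬ E y z)
    (hyT : y ∉ T) (hT : ∀ t ∈ T, t < z) (hPa : ∀ v, E v z → v ∈ T) : DSep E z y T := by
  refine ⟨hyz.ne', fun h => lt_irrefl _ (hT _ h), hyT, ?_⟩
  intro n p hn hp h0 hl
  have hadj : Adj E (p 0) (p ⟨1, by omega⟩) := hp.2 ⟨0, hn⟩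
  rcases hadj with h | h
  · have hz : z < p ⟨1, by omega⟩ := h0 ▸ hlt _ _ h
    exact blocked_of_directed_start hlt hn hp h (hl ▸ hyz.trans hz)
      (fun t ht => (hT t ht).trans hz)
  · have hn1 : 1 < n := by
      by_contra hn1
      obtain rfl : n = 1 := by omega
      exact hE (hl ▸ h0 ▸ h)
    refine ⟨1, by omega, hn1, Or.inl ⟨?_, hPa _ (h0 ▸ h)⟩⟩
    rintro ⟨h', -⟩
    exact lt_asymm (hlt _ _ h) (hlt _ _ h')

/-- Every other parent of a child of `X` lies in the Markov boundary of `X`. -/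
theorem mem_Mb_of_parent_of_child {E : V → V → Prop} {X v c : V}
    (hc : E X c) (hv : E v c) (hne : v ≠ X) : v ∈ Mb E X := by
  by_cases hadj : Adj E X v
  · rcases hadj with h | h
    · exact Or.inl (Or.inr h)
    · exact Or.inl (Or.inl h)
  · exact Or.inr ⟨hne, hadj, c, hc, hv⟩

/-- If `T` lies below `W` and contains every Markov boundary vertex of `X` below `W`, then it
d-separates `X` from a later vertex `W` not adjacent to it. -/
theorem dsep_of_last_coparent [LinearOrder V] {E : V → V → Prop}
    (hlt : ∀ a b : V, E a b → a < b) {T : Set V} {X W : V} (hXW : X < W) (hadj : ¬ Adj E X W)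
    (hXT : X ∉ T) (hT : ∀ t ∈ T, t < W) (hMb : ∀ v ∈ Mb E X, v < W → v ∈ T) :
    DSep E X W T := by
  refine ⟨hXW.ne, hXT, fun h => lt_irrefl _ (hT _ h), ?_⟩
  intro n p hn hp h0 hl
  have hn1 : 1 < n := by
    by_contra hn1
    obtain rfl : n = 1 := by omega
    have h : Adj E (p 0) (p (Fin.last 1)) := hp.2 0
    exact hadj (hl ▸ h0 ▸ h)
  have hne : p ⟨1, by omega⟩ ≠ W := by
    intro h
    have := hp.1 (h.trans hl.symm)
    simp [Fin.ext_iff] at this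
    omega
  have hadj01 : Adj E (p 0) (p ⟨1, by omega⟩) := hp.2 ⟨0, hn⟩
  rcases hadj01 with h | h
  · rcases lt_or_gt_of_ne hne with hW | hW
    · by_cases hcol : E (p ⟨2, by omega⟩) (p ⟨1, by omega⟩)
      · -- A parent of the conditioned child `p 1` is below `W`, hence conditioned as well.
        have h2W : p ⟨2, by omega⟩ < W := (hlt _ _ hcol).trans hW
        have hn2 : 2 < n := by
          by_contra hn2
          obtain rfl : n = 2 := by omega
          exact h2W.ne hl
        have h2X : p ⟨2, by omega⟩ ≠ X := by
          intro h
          have := hp.1 (h.trans h0.symm)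
          simp [Fin.ext_iff] at this
        refine ⟨2, by omega, hn2, Or.inl ⟨?_, ?_⟩⟩
        · rintro ⟨h', -⟩
          exact lt_asymm (hlt _ _ hcol) (hlt _ _ h')
        · exact hMb _ (mem_Mb_of_parent_of_child (h0 ▸ h) hcol h2X) h2W
      · refine ⟨1, by omega, hn1, Or.inl ⟨fun h' => hcol h'.2, ?_⟩⟩
        exact hMb _ (Or.inl (Or.inr (h0 ▸ h))) hW
    · exact blocked_of_directed_start hlt hn hp h (hl ▸ hW) (fun t ht => (hT t ht).trans hW)
  · have h1X : p ⟨1, by omega⟩ < X := h0 ▸ hlt _ _ h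
    refine ⟨1, by omega, hn1, Or.inl ⟨?_, ?_⟩⟩
    · rintro ⟨h', -⟩
      exact lt_asymm (hlt _ _ h) (hlt _ _ h')
    · exact hMb _ (Or.inl (Or.inl (h0 ▸ h))) (h1X.trans hXW)

/-- A finite set with at least `m` elements has a set of `m` last elements. -/
theorem exists_last_elements [LinearOrder V] (C : Finset V) (m : ℕ) (hm : m ≤ C.card) :
    ∃ K ⊆ C, K.card = m ∧ ∀ a ∈ K, ∀ b ∈ C, a < b → b ∈ K := by
  induction m with
  | zero => exact ⟨∅, by simp⟩
  | succ m ih =>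
    obtain ⟨K, hKC, hK, hup⟩ := ih (by omega)
    have hne : (C \ K).Nonempty := by
      rw [← Finset.card_pos, Finset.card_sdiff_of_subset hKC]
      omega
    obtain ⟨x, hx, hmax⟩ := (C \ K).exists_max_image id hne
    rw [Finset.mem_sdiff] at hx
    refine ⟨insert x K, Finset.insert_subset hx.1 hKC, by rw [Finset.card_insert_of_notMem hx.2, hK],
      ?_⟩
    intro a ha b hb hab
    rw [Finset.mem_insert] at ha ⊢
    right
    rcases ha with rfl | ha
    · by_contra hbK
      exact absurd (hmax b (Finset.mem_sdiff.2 ⟨hb, hbK⟩)) (not_le.2 hab)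
    · exact hup a ha b hb hab

/-- Every co-parent of `X` that comes after `X` has more than `t` children of `X` after it. -/
theorem coparent_lt_card_later [Fintype V] [LinearOrder V] {E : V → V → Prop}
    (hlt : ∀ a b : V, E a b → a < b) {X : V} {t : ℕ} (hX : RemCond E X t) (C : Finset V)
    (hC : ∀ v, v ∈ C ↔ E X v) {W : V} (hW : W ∈ CP E X) (hXW : X < W) :
    t < (C.filter (W < ·)).card := by
  classical
  by_contra hcard
  rw [not_lt] at hcard
  -- Passing to the largest co-parent only decreases the set of later children.
  obtain ⟨U, hU, hmax⟩ := (Finset.univ.filter (· ∈ CP E X)).exists_max_image id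
    ⟨W, by simpa using hW⟩
  simp only [Finset.mem_filter, Finset.mem_univ, true_and, id] at hU hmax
  have hWU : W ≤ U := hmax W hW
  have hXU : X < U := hXW.trans_le hWU
  have hsub : C.filter (U < ·) ⊆ C.filter (W < ·) := by
    intro c hc
    rw [Finset.mem_filter] at hc ⊢
    exact ⟨hc.1, hWU.trans_lt hc.2⟩
  have hS : ↑(C.filter (U < ·)) ⊆ Mb E X := by
    intro c hc
    rw [Finset.mem_coe, Finset.mem_filter, hC] at hc
    exact Or.inl (Or.inr hc.1)
  refine (hX _ hS ((Finset.card_le_card hsub).trans hcard)).2 U ⟨Or.inr hU, by simp⟩ ?_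
  refine dsep_of_last_coparent hlt hXU hU.2.1 ?_ ?_ ?_
  · rintro ⟨(h | h) | h, -⟩
    · exact lt_irrefl _ (hlt _ _ h)
    · exact lt_irrefl _ (hlt _ _ h)
    · exact h.1 rfl
  · rintro v ⟨hv, hvn⟩
    simp only [mem_union, mem_singleton_iff, Finset.mem_coe, Finset.mem_filter, hC, not_or,
      not_and, not_lt] at hvn
    rcases hv with (h | h) | h
    · exact (hlt _ _ h).trans hXU
    · exact lt_of_le_of_ne (hvn.2 h) hvn.1
    · exact lt_of_le_of_ne (hmax v h) hvn.1
  · intro v hv hvU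
    refine ⟨hv, ?_⟩
    simp only [mem_union, mem_singleton_iff, Finset.mem_coe, Finset.mem_filter, not_or, not_and]
    exact ⟨hvU.ne, fun _ => not_lt.2 hvU.le⟩

/-- A child of `X` with at most `t` later children receives an edge from each earlier child. -/
theorem edge_of_card_later_le [Fintype V] [LinearOrder V] {E : V → V → Prop}
    (hlt : ∀ a b : V, E a b → a < b) {X : V} {t : ℕ} (hX : RemCond E X t) (C : Finset V)
    (hC : ∀ v, v ∈ C ↔ E X v) {Y Z : V} (hY : E X Y) (hZ : E X Z) (hYZ : Y < Z)
    (hcard : (C.filter (Z < ·)).card ≤ t) : E Y Z := by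
  classical
  by_contra hE
  have hXZ : X < Z := hlt _ _ hZ
  have hCP : ∀ W ∈ CP E X, W < Z := by
    intro W hW
    by_contra hWZ
    rw [not_lt] at hWZ
    refine absurd (coparent_lt_card_later hlt hX C hC hW (hXZ.trans_le hWZ))
      (not_lt.2 ((Finset.card_le_card ?_).trans hcard))
    intro c hc
    rw [Finset.mem_filter] at hc ⊢
    exact ⟨hc.1, hWZ.trans_lt hc.2⟩
  have hS : ↑(C.filter (Z < ·)) ⊆ Mb E X := by
    intro c hc
    rw [Finset.mem_coe, Finset.mem_filter, hC] at hc
    exact Or.inl (Or.inr hc.1)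
  refine (hX _ hS hcard).1 Z ⟨Or.inl (Or.inr hZ), by simp⟩ Y
    ⟨Or.inl (Or.inr hY), by simp [hYZ.le]⟩ hYZ.ne' ?_
  refine dsep_of_parents hlt hYZ hE (by simp) ?_ ?_
  · rintro v ⟨hv, hvn⟩
    simp only [mem_union, mem_insert_iff, mem_singleton_iff, Finset.mem_coe, Finset.mem_filter,
      hC, not_or, not_and, not_lt] at hvn
    rcases hv with ((h | h) | h) | h
    · exact (hlt _ _ h).trans hXZ
    · exact lt_of_le_of_ne (hvn.2 h) hvn.1.1
    · exact hCP v h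
    · exact h ▸ hXZ
  · intro v hv
    have hvZ : v < Z := hlt _ _ hv
    refine ⟨?_, ?_⟩
    · by_cases hvX : v = X
      · exact Or.inr hvX
      · exact Or.inl (mem_Mb_of_parent_of_child hZ hv hvX)
    · simp only [mem_union, mem_insert_iff, mem_singleton_iff, Finset.mem_coe, Finset.mem_filter,
        not_or, not_and]
      exact ⟨⟨hvZ.ne, fun h => hE (h ▸ hv)⟩, fun _ => not_lt.2 hvZ.le⟩

/-- under the removability condition with clique number at most `m`,
`X` has at most `m - 1` children. -/
theorem stmt3 [Fintype V] (E : V → V → Prop) (hacy : Acyclic E) (m : ℕ)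
    (hclq : CliqueNumLE E m) (X : V) (hX : RemCond E X (m - 2)) :
    (Ch E X).ncard ≤ m - 1 := by
  classical
  by_contra hcon
  obtain ⟨_, hlt⟩ := exists_topological_order E hacy
  set C : Finset V := Finset.univ.filter (E X ·) with hCdef
  have hC : ∀ v, v ∈ C ↔ E X v := by simp [hCdef]
  have hCcard : (Ch E X).ncard = C.card := by
    rw [← Set.ncard_coe_finset]
    congr 1
    ext v
    simp [hC, Ch]
  obtain ⟨K, hKC, hK, hup⟩ := exists_last_elements C m (by omega)
  have hpair : ∀ a ∈ K, ∀ b ∈ K, a < b → E a b := by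
    intro a ha b hb hab
    refine edge_of_card_later_le hlt hX C hC ((hC a).1 (hKC ha)) ((hC b).1 (hKC hb)) hab ?_
    -- The children after `b` belong to `K` and differ from `a` and `b`.
    have hsub : C.filter (b < ·) ⊆ (K.erase a).erase b := by
      intro c hc
      rw [Finset.mem_filter] at hc
      simp only [Finset.mem_erase]
      exact ⟨hc.2.ne', (hab.trans hc.2).ne', hup b hb c hc.1 hc.2⟩
    refine (Finset.card_le_card hsub).trans ?_
    rw [Finset.card_erase_of_mem (Finset.mem_erase.2 ⟨hab.ne', hb⟩), Finset.card_erase_of_mem ha,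
      hK]
    omega
  have hXK : X ∉ K := fun h => lt_irrefl _ (hlt _ _ ((hC X).1 (hKC h)))
  have hbound := hclq (insert X K) (by
    intro a ha b hb hab
    rw [Finset.mem_insert] at ha hb
    rcases ha with rfl | ha <;> rcases hb with rfl | hb
    · exact absurd rfl hab
    · exact Or.inl ((hC b).1 (hKC hb))
    · exact Or.inr ((hC a).1 (hKC ha))
    · rcases lt_or_gt_of_ne hab with h | h
      · exact Or.inl (hpair a ha b hb h)
      · exact Or.inr (hpair b hb a ha h))
  rw [Finset.card_insert_of_notMem hXK, hK] at hbound
  omega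
end

section
/- Let G = (V,E) be a finite DAG with ω(G) ≤ m and let X ∈ V be a vertex such that for every S ⊆ Mb(X) with |S| ≤ m−2: (i) for all distinct Y,Z ∈ Mb(X)∖S, the set (Mb(X)∪{X})∖({Y,Z}∪S) does not d-separate Y and Z in G; and (ii) for all Y ∈ Mb(X)∖S, the set Mb(X)∖({Y}∪S) does not d-separate X and Y in G. Then for every co-parent Y ∈ CP(X), the set Mb(X)∖({Y}∪Ch(X)) d-separates X and Y in G. -/
/-!
Fix a topological order of the DAG. The first vertex after `X` on a path from `X` that is not
blocked at a parent of `X` is a child of `X`, and from there the path either runs directedly to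
`Y` or meets a collider below `X`. Hence the claim follows once no co-parent of `X` comes after
a child of `X` in the topological order, since then no vertex of `Mb(X) ∖ Ch(X)` lies below `X`.

Suppose some co-parent comes after a child `C`, and let `Y` be the last co-parent. All vertices
of `Mb(X)` after `Y` are then children of `X`; call this set `S`. For `W ∈ S` let `up W` be the
set of vertices of `Mb(X)` after `W`. If `|up W| ≤ m - 2`, condition (i) for `up W` shows that
`W` is adjacent to every earlier vertex of `Mb(X)`: the conditioning set contains the remaining
parents of `W` and no descendant of `W`, so a non-adjacent earlier vertex would be separated
from `W` (`adj_of_remCond`). The `W ∈ S` with `|up W| ≤ m - 2` thus form a clique with `X` and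
`C`, so there are at most `m - 2` of them, which forces all of `S` to be of this kind and
`|S| ≤ m - 2`. But `Mb(X) ∖ ({Y} ∪ S)` separates `X` and `Y`, contradicting condition (ii).

All three separations are instances of `dSep_of_children`.
-/

open Set

variable {V : Type*}

/-- Criterion for separating non-adjacent `x` and `y` by a set `T` containing the parents of `x`:
every path leaving `x` through a child `c` is stopped, either at `c` or at the next vertex because
`c` and its parents other than `x` lie in `T`, or at the first collider below `c` because nothing
at or below `c` lies in `T ∪ {y}`. -/
lemma dSep_of_children {E : V → V → Prop} {x y : V} {T : Set V} (hxy : x ≠ y)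
    (hadj : ¬ Adj E x y) (hx : x ∉ T) (hy : y ∉ T) (hpa : ∀ p, E p x → p ∈ T)
    (hch : ∀ c, E x c → (c ∈ T ∧ ∀ p, E p c → p ≠ x → p ∈ T) ∨
      (∀ d, Relation.ReflTransGen E c d → d ∉ T ∧ d ≠ y))
    (hasym : ∀ a b, E a b → ¬ E b a) : DSep E x y T := by
  refine ⟨hxy, hx, hy, ?_⟩
  rintro n p hn ⟨hinj, hp⟩ h0 hl
  have step : ∀ k (hk : k < n), Adj E (p ⟨k, by omega⟩) (p ⟨k + 1, by omega⟩) :=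
    fun k hk => hp ⟨k, hk⟩
  have h0' : p ⟨0, by omega⟩ = x := h0
  have hl' : p ⟨n, by omega⟩ = y := hl
  have hn1 : 1 < n := by
    by_contra hcon
    have h1 : n = 1 := by omega
    subst h1
    have := step 0 hn
    rw [h0'] at this
    exact hadj (hl' ▸ this)
  have s0 : Adj E x (p ⟨1, by omega⟩) := h0' ▸ step 0 hn
  have s1 := step 1 hn1
  rcases s0 with s0 | s0
  · rcases hch _ s0 with ⟨hc, hcp⟩ | hd
    · by_cases hcol : E (p ⟨2, by omega⟩) (p ⟨1, by omega⟩)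
      · have h2x : p ⟨2, by omega⟩ ≠ x := by
          rw [← h0']
          intro h
          have := hinj h
          simp at this
        have h2 := hcp _ hcol h2x
        have hn2 : 2 < n := by
          rcases Nat.lt_or_ge 2 n with h | h
          · exact h
          · have h2 : n = 2 := by omega
            subst h2
            exact absurd (hl' ▸ h2) hy
        refine ⟨2, by omega, hn2, Or.inl ⟨fun h => hasym _ _ hcol h.1, h2⟩⟩
      · exact ⟨1, by omega, hn1, Or.inl ⟨fun h => hcol h.2, hc⟩⟩
    · -- If no collider below `c` blocks, the path is directed all the way down to `y`.
      by_contra hnb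
      have key : ∀ k (_ : 0 < k) (hk : k ≤ n),
          Relation.ReflTransGen E (p ⟨1, by omega⟩) (p ⟨k, by omega⟩) ∧
            E (p ⟨k - 1, by omega⟩) (p ⟨k, by omega⟩) := by
        intro k hk0
        induction k, hk0 using Nat.le_induction with
        | base => exact fun _ => ⟨Relation.ReflTransGen.refl, by simpa [h0] using s0⟩
        | succ k hk1 ih =>
          intro hk
          obtain ⟨h1, h2⟩ := ih (by omega)
          rcases step k (by omega) with h | h
          · exact ⟨h1.tail h, h⟩
          · exact (hnb ⟨k, hk1, by omega, Or.inr ⟨⟨h2, h⟩, (hd _ h1).1,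
              fun d hdd => (hd d (h1.trans hdd.to_reflTransGen)).1⟩⟩).elim
      exact (hd _ (key n hn le_rfl).1).2 hl'
  · refine ⟨1, by omega, hn1, Or.inl ⟨fun h => hasym _ _ s0 ?_, hpa _ s0⟩⟩
    simpa [h0] using h.1

/-- A finite DAG has an injective topological ranking: the number of proper ancestors, with ties
broken by an arbitrary enumeration of the vertices. -/
lemma exists_rank [Fintype V] {E : V → V → Prop} (hacy : Acyclic E) :
    ∃ r : V → ℕ, Function.Injective r ∧ ∀ a b, E a b → r a < r b := by
  classical
  let N := Fintype.card V
  let e := Fintype.equivFin V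
  let anc : V → Set V := fun v => {b | Relation.TransGen E b v}
  refine ⟨fun v => (anc v).ncard * N + e v, ?_, ?_⟩
  · intro a b h
    have ha : (e a : ℕ) < N := (e a).isLt
    have hb : (e b : ℕ) < N := (e b).isLt
    have h' := congrArg (· % N) h
    simp only [Nat.mul_add_mod_self_right, Nat.mod_eq_of_lt ha, Nat.mod_eq_of_lt hb] at h'
    exact e.injective (Fin.ext h')
  · intro a b h
    have hlt : (anc a).ncard < (anc b).ncard := by
      apply Set.ncard_lt_ncard _ (Set.toFinite _)
      refine ⟨fun c hc => Relation.TransGen.tail hc h, fun hsub => ?_⟩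
      exact hacy a (hsub (Relation.TransGen.single h))
    have ha : (e a : ℕ) < N := (e a).isLt
    have := Nat.mul_le_mul_right N hlt
    simp only [Nat.succ_mul] at this
    show (anc a).ncard * N + e a < (anc b).ncard * N + e b
    omega

lemma rank_le_of_reflTransGen {E : V → V → Prop} {r : V → ℕ} (hr : ∀ a b, E a b → r a < r b)
    {a b : V} (h : Relation.ReflTransGen E a b) : r a ≤ r b := by
  induction h with
  | refl => exact le_rfl
  | tail _ h ih => exact ih.trans (hr _ _ h).le

lemma mem_mb_of_parent_of_child_s5 {E : V → V → Prop} {x p c : V} (hc : E x c) (hp : E p c)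
    (hpx : p ≠ x) : p ∈ Mb E x := by
  by_cases h : Adj E x p
  · rcases h with h | h
    · exact Or.inl (Or.inr h)
    · exact Or.inl (Or.inl h)
  · exact Or.inr ⟨hpx, h, c, hc, hp⟩

lemma ne_of_mem_mb {E : V → V → Prop} {x y : V} (hasym : ∀ a b, E a b → ¬ E b a)
    (h : y ∈ Mb E x) : y ≠ x := by
  rintro rfl
  rcases h with (h | h) | h
  · exact hasym _ _ h h
  · exact hasym _ _ h h
  · exact h.1 rfl

/-- A child `W` of `X` with at most `t` vertices of `Mb(X)` ranked after it is adjacent to every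
vertex of `Mb(X)` ranked before it. -/
lemma adj_of_remCond {E : V → V → Prop} {r : V → ℕ} (hr : ∀ a b, E a b → r a < r b)
    {X : V} {t : ℕ} (hX : RemCond E X t) {W Z : V} (hW : E X W) (hZ : Z ∈ Mb E X)
    (hZW : r Z < r W) (S : Finset V) (hS : ∀ v, v ∈ S ↔ v ∈ Mb E X ∧ r W < r v)
    (hcard : S.card ≤ t) : Adj E W Z := by
  have hasym : ∀ a b, E a b → ¬ E b a := fun a b h h' => (hr _ _ h).asymm (hr _ _ h')
  have hWZ : W ≠ Z := by rintro rfl; omega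
  have hWS : W ∉ S := fun h => by have := ((hS W).1 h).2; omega
  have hZS : Z ∉ S := fun h => by have := ((hS Z).1 h).2; omega
  by_contra hadj
  refine (hX S (fun v hv => ((hS v).1 hv).1) hcard).1 W ⟨Or.inl (Or.inr hW), hWS⟩ Z ⟨hZ, hZS⟩
    hWZ (dSep_of_children hWZ hadj (by simp) (by simp) ?_ ?_ hasym)
  · intro p hp
    have hpW := hr _ _ hp
    refine ⟨?_, ?_⟩
    · by_cases h : p = X
      · exact Or.inr h
      · exact Or.inl (mem_mb_of_parent_of_child_s5 hW hp h)
    · rintro ((rfl | rfl) | h)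
      · omega
      · exact hadj (Or.inr hp)
      · have := ((hS p).1 h).2
        omega
  · refine fun c hc => Or.inr fun d hd => ?_
    have h1 := hr _ _ hc
    have h2 := rank_le_of_reflTransGen hr hd
    have h3 := hr _ _ hW
    refine ⟨?_, by rintro rfl; omega⟩
    rintro ⟨hm | rfl, hn⟩
    · exact hn (Or.inr ((hS d).2 ⟨hm, by omega⟩))
    · omega

/-- Under the removability conditions, every co-parent of `X` is ranked before every child. -/
lemma not_child_lt_coparent [Fintype V] {E : V → V → Prop} {r : V → ℕ}
    (hinj : Function.Injective r) (hr : ∀ a b, E a b → r a < r b) {m : ℕ}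
    (hclq : CliqueNumLE E m) {X : V} (hX : RemCond E X (m - 2)) {Y' C : V} (hY' : Y' ∈ CP E X)
    (hC : E X C) : ¬ r C < r Y' := by
  classical
  intro hCY'
  have hasym : ∀ a b, E a b → ¬ E b a := fun a b h h' => (hr _ _ h).asymm (hr _ _ h')
  obtain ⟨Y, hY, hYmax⟩ := Set.exists_max_image (CP E X) r (Set.toFinite _) ⟨Y', hY'⟩
  have hCY : r C < r Y := hCY'.trans_le (hYmax _ hY')
  have hXC := hr _ _ hC
  have hCmb : C ∈ Mb E X := Or.inl (Or.inr hC)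
  let up : V → Finset V := fun W => Finset.univ.filter fun v => v ∈ Mb E X ∧ r W < r v
  have hup : ∀ W v, v ∈ up W ↔ v ∈ Mb E X ∧ r W < r v := by simp [up]
  have hSch : ∀ W ∈ up Y, E X W := by
    intro W hW
    obtain ⟨(h | h) | h, hlt⟩ := (hup _ _).1 hW
    · have := hr _ _ h
      omega
    · exact h
    · have := hYmax _ h
      omega
  let T := (up Y).filter fun W => (up W).card ≤ m - 2
  have hTadj : ∀ W ∈ T, ∀ Z ∈ Mb E X, r Z < r W → Adj E W Z := by
    intro W hW Z hZ hlt
    obtain ⟨hW1, hW2⟩ := Finset.mem_filter.1 hW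
    exact adj_of_remCond hr hX (hSch W hW1) hZ hlt (up W) (hup W) hW2
  have hTX : ∀ W ∈ T, E X W ∧ r Y < r W := fun W hW =>
    ⟨hSch W (Finset.mem_filter.1 hW).1, ((hup _ _).1 (Finset.mem_filter.1 hW).1).2⟩
  have hTcard : T.card + 2 ≤ m := by
    have hCT : C ∉ T := fun h => by have := (hTX C h).2; omega
    have hXT : X ∉ insert C T := by
      rw [Finset.mem_insert]
      rintro (rfl | h)
      · omega
      · have := (hTX X h).2
        omega
    rw [show T.card + 2 = T.card + 1 + 1 from rfl, ← Finset.card_insert_of_notMem hCT,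
      ← Finset.card_insert_of_notMem hXT]
    apply hclq
    -- By symmetry, adjacency is only checked with the second vertex ranked first.
    have main : ∀ a ∈ insert X (insert C T), ∀ b ∈ insert X (insert C T), r b < r a →
        Adj E a b := by
      intro a ha b hb hlt
      simp only [Finset.mem_insert] at ha hb
      have hbX : b = X ∨ b ∈ Mb E X := by
        rcases hb with rfl | rfl | hb
        · exact Or.inl rfl
        · exact Or.inr hCmb
        · exact Or.inr (Or.inl (Or.inr (hTX b hb).1))
      rcases ha with rfl | rfl | ha
      · rcases hb with rfl | rfl | hb
        · omega
        · omega
        · have := hr _ _ (hTX b hb).1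
          omega
      · rcases hb with rfl | rfl | hb
        · exact Or.inr hC
        · omega
        · have := (hTX b hb).2
          omega
      · rcases hbX with rfl | hbm
        · exact Or.inr (hTX a ha).1
        · exact hTadj a ha b hbm hlt
    intro a ha b hb hab
    rcases lt_or_gt_of_ne (fun h => hab (hinj h)) with h | h
    · exact (main b hb a ha h).symm
    · exact main a ha b hb h
  have hTS : T = up Y := by
    refine Finset.filter_true_of_mem ?_
    by_contra hcon
    push Not at hcon
    obtain ⟨W0, hW0, hlarge⟩ := hcon
    -- The last `W` failing the bound has `up W ⊆ T`, hence satisfies it.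
    obtain ⟨W, hW, hWmax⟩ := Finset.exists_max_image
      ((up Y).filter fun W => m - 2 < (up W).card) r ⟨W0, Finset.mem_filter.2 ⟨hW0, hlarge⟩⟩
    obtain ⟨hW1, hW2⟩ := Finset.mem_filter.1 hW
    have hsub : up W ⊆ T := by
      intro v hv
      obtain ⟨hv1, hv2⟩ := (hup _ _).1 hv
      have hvY : v ∈ up Y := (hup _ _).2 ⟨hv1, ((hup _ _).1 hW1).2.trans hv2⟩
      refine Finset.mem_filter.2 ⟨hvY, ?_⟩
      by_contra hgt
      have := hWmax v (Finset.mem_filter.2 ⟨hvY, by omega⟩)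
      omega
    have := Finset.card_le_card hsub
    omega
  have hScard : (up Y).card ≤ m - 2 := by
    rw [← hTS]
    omega
  refine (hX (up Y) (fun v hv => ((hup _ _).1 hv).1) hScard).2 Y
    ⟨Or.inr hY, fun h => (lt_irrefl _ ((hup _ _).1 h).2)⟩
    (dSep_of_children hY.1.symm hY.2.1 (fun h => ne_of_mem_mb hasym h.1 rfl) (by simp) ?_ ?_ hasym)
  · intro p hp
    refine ⟨Or.inl (Or.inl hp), ?_⟩
    rintro (rfl | h)
    · exact hY.2.1 (Or.inr hp)
    · have h1 := ((hup _ _).1 h).2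
      have h2 := hr _ _ hp
      omega
  · intro c hc
    have hcm : c ∈ Mb E X := Or.inl (Or.inr hc)
    by_cases hcY : r Y < r c
    · refine Or.inr fun d hd => ?_
      have h2 := rank_le_of_reflTransGen hr hd
      refine ⟨fun h => h.2 (Or.inr ((hup _ _).2 ⟨h.1, by omega⟩)), by rintro rfl; omega⟩
    · refine Or.inl ⟨⟨hcm, ?_⟩, fun p hp hpX =>
        ⟨mem_mb_of_parent_of_child_s5 hc hp hpX, ?_⟩⟩
      · rintro (rfl | h)
        · exact hY.2.1 (Or.inl hc)
        · exact hcY ((hup _ _).1 h).2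
      · have h2 := hr _ _ hp
        rintro (rfl | h)
        · omega
        · have := ((hup _ _).1 h).2
          omega

/-- for a vertex satisfying the removability condition, each co-parent `Y`
is d-separated from `X` by `Mb(X) ∖ ({Y} ∪ Ch(X))`. -/
theorem stmt5 [Fintype V] (E : V → V → Prop) (hacy : Acyclic E) (m : ℕ)
    (hclq : CliqueNumLE E m) (X : V) (hX : RemCond E X (m - 2)) :
    ∀ Y ∈ CP E X, DSep E X Y (Mb E X \ ({Y} ∪ Ch E X)) := by
  obtain ⟨r, hinj, hr⟩ := exists_rank hacy
  have hasym : ∀ a b, E a b → ¬ E b a := fun a b h h' => (hr _ _ h).asymm (hr _ _ h')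
  intro Y hY
  have hbefore : ∀ c d, E X c → Relation.ReflTransGen E c d → d ∉ CP E X := by
    intro c d hc hd hdcp
    rcases (rank_le_of_reflTransGen hr hd).lt_or_eq with h | h
    · exact not_child_lt_coparent hinj hr hclq hX hdcp hc h
    · exact hdcp.2.1 (Or.inl (hinj h ▸ hc))
  refine dSep_of_children hY.1.symm hY.2.1 (fun h => ne_of_mem_mb hasym h.1 rfl) (by simp) ?_ ?_
    hasym
  · intro p hp
    refine ⟨Or.inl (Or.inl hp), ?_⟩
    rintro (rfl | h)
    · exact hY.2.1 (Or.inr hp)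
    · exact hasym _ _ hp h
  · refine fun c hc => Or.inr fun d hd => ⟨?_, ?_⟩
    · rintro ⟨(h | h) | h, hn⟩
      · have h1 := hr _ _ hc
        have h2 := rank_le_of_reflTransGen hr hd
        have h3 := hr _ _ h
        omega
      · exact hn (Or.inr h)
      · exact hbefore c d hc hd h
    · rintro rfl
      exact hbefore c d hc hd hY
end
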